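/- Let V ⊆ ℂ^n be a d-dimensional algebraic set and τ > 0 a real number. Let S be a finite subset of ℂ^n with |S| ≥ τ·δ(V)^d·deg(V). Then there exists a polynomial P ∈ ℂ[x_1,…,x_n] of degree at most C(n,τ)·(|S|/deg(V))^{1/d}, for a constant C(n,τ) depending only on n and τ, vanishing at every point of S but not vanishing identically on V (i.e., not vanishing on at least one irreducible component of V). -/

import Mathlib

open MvPolynomial Set

noncomputable section

namespace Paper

variable (n : ℕ)

/-- The zero locus in `ℂⁿ` of a set of polynomials. -/
def zeroLocus (I : Set (MvPolynomial (Fin n) ℂ)) : Set (Fin n → ℂ) :=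
  {x | ∀ f ∈ I, eval x f = 0}

/-- A subset of `ℂⁿ` is algebraic if it is the zero locus of a set of polynomials. -/
def IsAlgebraicSet (V : Set (Fin n → ℂ)) : Prop :=
  ∃ I : Set (MvPolynomial (Fin n) ℂ), V = zeroLocus n I

/-- An irreducible (affine) variety in `ℂⁿ`: a nonempty algebraic set that is not covered
by two algebraic sets unless it is contained in one of them. -/
def IsIrredVariety (V : Set (Fin n → ℂ)) : Prop :=
  IsAlgebraicSet n V ∧ V.Nonempty ∧
    ∀ V₁ V₂ : Set (Fin n → ℂ), IsAlgebraicSet n V₁ → IsAlgebraicSet n V₂ →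
      V ⊆ V₁ ∪ V₂ → V ⊆ V₁ ∨ V ⊆ V₂

/-- There is a strictly increasing chain of `d + 1` irreducible varieties inside `V`. -/
def HasChain (V : Set (Fin n → ℂ)) (d : ℕ) : Prop :=
  ∃ W : Fin (d + 1) → Set (Fin n → ℂ),
    (∀ i, IsIrredVariety n (W i)) ∧ (∀ i j : Fin (d + 1), i < j → W i ⊂ W j) ∧
      W (Fin.last d) ⊆ V

/-- The (Krull) dimension of a subset of `ℂⁿ`, as the length of the longest chain of
irreducible subvarieties. -/
def dim (V : Set (Fin n → ℂ)) : ℕ := sSup {d | HasChain n V d}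

/-- `W` is an irreducible component of `X`: an irreducible subvariety that is maximal among
irreducible subvarieties of `X`. -/
def IsIrredComponent (W X : Set (Fin n → ℂ)) : Prop :=
  IsIrredVariety n W ∧ W ⊆ X ∧
    ∀ W', IsIrredVariety n W' → W ⊆ W' → W' ⊆ X → W' = W

/-- The degree of an irreducible variety `V ⊆ ℂⁿ` of dimension `d` (i.e. the degree of its
projective closure): the largest finite number of points in which an affine-linear subspace of
dimension `n - d` meets `V`. -/
def degree (V : Set (Fin n → ℂ)) : ℕ :=
  sSup { m | ∃ L : AffineSubspace ℂ (Fin n → ℂ),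
    Module.finrank ℂ L.direction = n - dim n V ∧ (V ∩ ↑L).Finite ∧ (V ∩ ↑L).ncard = m }

/-- The degree of an algebraic set: the sum of the degrees of its irreducible components. -/
def degreeSum (X : Set (Fin n → ℂ)) : ℕ :=
  ∑ᶠ W ∈ {W | IsIrredComponent n W X}, degree n W

/-- The maximal dimension of an irreducible component of `X` containing `V` equals `e`. -/
def MaxCompDimEq (X V : Set (Fin n → ℂ)) (e : ℕ) : Prop :=
  (∃ W, IsIrredComponent n W X ∧ V ⊆ W ∧ dim n W = e) ∧
    ∀ W, IsIrredComponent n W X → V ⊆ W → dim n W ≤ e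

/-- The partial degrees `δ_i(V)` of an irreducible variety `V`:  the minimal `δ` such that there
are polynomials of degree at most `δ` cutting out an algebraic set containing `V` whose
irreducible components containing `V` have maximal dimension `n - i`.  By convention
`δ_0(V) = 0`. -/
def partialDeg (V : Set (Fin n → ℂ)) (i : ℕ) : ℕ :=
  if i = 0 then 0
  else sInf { δ | ∃ I : Finset (MvPolynomial (Fin n) ℂ),
    (∀ f ∈ I, f.totalDegree ≤ δ) ∧ V ⊆ zeroLocus n ↑I ∧
      MaxCompDimEq n (zeroLocus n ↑I) V (n - i) }

/-- The partial degrees as extended naturals, with the convention `δ_i(V) = ∞` for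
`i > n - dim V`. -/
def partialDegE (V : Set (Fin n → ℂ)) (i : ℕ) : ℕ∞ :=
  if i ≤ n - dim n V then (partialDeg n V i : ℕ∞) else ⊤

/-- `δ(V)` for an irreducible variety `V`: the minimal `δ` such that `V` is an irreducible
component of the zero set of a finite family of polynomials of degree at most `δ`. -/
def deltaIrr (V : Set (Fin n → ℂ)) : ℕ :=
  sInf { δ | ∃ I : Finset (MvPolynomial (Fin n) ℂ),
    (∀ f ∈ I, f.totalDegree ≤ δ) ∧ IsIrredComponent n V (zeroLocus n ↑I) }

/-- `δ(V)` for a general algebraic set `V`: the minimal `δ` such that every irreducible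
component of `V` is an irreducible component of the zero set of a finite family of polynomials
of degree at most `δ`. -/
def deltaSet (V : Set (Fin n → ℂ)) : ℕ :=
  sInf { δ | ∃ I : Finset (MvPolynomial (Fin n) ℂ),
    (∀ f ∈ I, f.totalDegree ≤ δ) ∧
      ∀ W, IsIrredComponent n W V → IsIrredComponent n W (zeroLocus n ↑I) }

/-- An algebraic set all of whose irreducible components have dimension `d`. -/
def IsAlgSetOfDim (V : Set (Fin n → ℂ)) (d : ℕ) : Prop :=
  IsAlgebraicSet n V ∧ V.Nonempty ∧ ∀ W, IsIrredComponent n W V → dim n W = d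

/-- `Δ_i(V) = max (deg V / (δ_{i+1}(V) ⋯ δ_{n-d}(V))) 1`. -/
def Delta (V : Set (Fin n → ℂ)) (i : ℕ) : ℝ :=
  max ((degree n V : ℝ) / ∏ j ∈ Finset.Icc (i + 1) (n - dim n V), (partialDeg n V j : ℝ)) 1

/-- `i` is admissible with respect to `V` if `δ_{i+1}(V) > 2 i δ_i(V)` (with the convention
`δ_i(V) = ∞` for `i > n - dim V`). -/
def Admissible (V : Set (Fin n → ℂ)) (i : ℕ) : Prop :=
  ((2 * i : ℕ) : ℕ∞) * partialDegE n V i < partialDegE n V (i + 1)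

/-- The interval `ℛ_i(V) = [c₁ δ_i(V)^{n-i} Δ_i(V), (c₀/2) δ_{i+1}(V)^{n-i} Δ_i(V)]`,
where `δ_{n-d+1}(V) = ∞` makes the last interval a half-line. -/
def RSet (c0 c1 : ℝ) (V : Set (Fin n → ℂ)) (i : ℕ) : Set ℝ :=
  if i = n - dim n V then
    Set.Ici (c1 * (partialDeg n V i : ℝ) ^ (n - i) * Delta n V i)
  else
    Set.Icc (c1 * (partialDeg n V i : ℝ) ^ (n - i) * Delta n V i)
      ((c0 / 2) * (partialDeg n V (i + 1) : ℝ) ^ (n - i) * Delta n V i)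

/-- The interval `ℛ^l_{s,τ}(V) = [τ δ_s(V)^{n-(s+l)} Δ_s(V), τ δ_{s+1}(V)^{n-(s+l)} Δ_s(V)]`,
where `δ_{n-d+1}(V) = ∞` makes the last interval a half-line. -/
def RlSet (τ : ℝ) (l : ℕ) (V : Set (Fin n → ℂ)) (s : ℕ) : Set ℝ :=
  if s = n - dim n V then
    Set.Ici (τ * (partialDeg n V s : ℝ) ^ (n - (s + l)) * Delta n V s)
  else
    Set.Icc (τ * (partialDeg n V s : ℝ) ^ (n - (s + l)) * Delta n V s)
      (τ * (partialDeg n V (s + 1) : ℝ) ^ (n - (s + l)) * Delta n V s)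

/-- The ideal `I(V)` of polynomials vanishing on `V ⊆ ℂⁿ`. -/
def vanishingIdeal (V : Set (Fin n → ℂ)) : Ideal (MvPolynomial (Fin n) ℂ) where
  carrier := {f | ∀ x ∈ V, eval x f = 0}
  add_mem' := by
    intro a b ha hb x hx
    simp [ha x hx, hb x hx]
  zero_mem' := by
    intro x hx
    simp
  smul_mem' := by
    intro c f hf x hx
    simp [smul_eq_mul, hf x hx]

/-- The ideal `I_ℝ(V)` of real polynomials vanishing on `V ⊆ ℂⁿ`. -/
def vanishingIdealR (V : Set (Fin n → ℂ)) : Ideal (MvPolynomial (Fin n) ℝ) :=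
  (vanishingIdeal n V).comap (MvPolynomial.map (algebraMap ℝ ℂ))

/-- The affine Hilbert function `H_{I(V)}(m) = dim_ℂ ℂ[x]_{≤ m} / I(V)_{≤ m}`, realised as the
dimension of the image of the space of polynomials of total degree at most `m` in the quotient
ring `ℂ[x]/I(V)`. -/
def hilbert (V : Set (Fin n → ℂ)) (m : ℕ) : ℕ :=
  Module.finrank ℂ
    (Submodule.map (Ideal.Quotient.mkₐ ℂ (vanishingIdeal n V)).toLinearMap
      (restrictTotalDegree (Fin n) ℂ m))

/-- The real affine Hilbert function `H_{I(V),ℝ}(m) = dim_ℝ ℝ[x]_{≤ m} / I_ℝ(V)_{≤ m}`. -/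
def hilbertR (V : Set (Fin n → ℂ)) (m : ℕ) : ℕ :=
  Module.finrank ℝ
    (Submodule.map (Ideal.Quotient.mkₐ ℝ (vanishingIdealR n V)).toLinearMap
      (restrictTotalDegree (Fin n) ℝ m))

/-- The inclusion `ℝⁿ → ℂⁿ`. -/
def toC (x : Fin n → ℝ) : Fin n → ℂ := fun i => (x i : ℂ)

/-- The set of real points of `V ⊆ ℂⁿ`. -/
def realPts (V : Set (Fin n → ℂ)) : Set (Fin n → ℝ) := {x | toC n x ∈ V}

/-- The real zero set of a real polynomial. -/
def zeroSetR (g : MvPolynomial (Fin n) ℝ) : Set (Fin n → ℝ) := {x | eval x g = 0}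

/-- The zero locus of the polynomials `P 1, …, P i` (the first `i` members of a tuple of
polynomials indexed from `1`). -/
def zeroLocusUpTo (P : ℕ → MvPolynomial (Fin n) ℂ) (i : ℕ) : Set (Fin n → ℂ) :=
  zeroLocus n {f | ∃ j : ℕ, 1 ≤ j ∧ j ≤ i ∧ f = P j}

/-- `V'` is an `(n-s)`-minimal variety of the irreducible variety `V`. -/
def IsMinimalVariety (V V' : Set (Fin n → ℂ)) (s : ℕ) : Prop :=
  IsIrredVariety n V' ∧ V ⊆ V' ∧ dim n V' = n - s ∧
    ∀ f ∈ vanishingIdeal n V, f ∉ vanishingIdeal n V' →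
      partialDegE n V (s + 1) ≤ (f.totalDegree : ℕ∞)

/-- `S` is `(k,b)`-free with respect to `T`, for the incidence relation `R`. -/
def KBFree {α β : Type*} (R : α → β → Prop) (S : Finset α) (T : Finset β) (k b : ℕ) : Prop :=
  ¬ ∃ (P : Finset α) (B : Finset β), P ⊆ S ∧ B ⊆ T ∧ P.card = k ∧ B.card = b ∧
      ∀ s ∈ P, ∀ t ∈ B, R s t

/-- The number of incidences between a finite set of points and a finite family of sets. -/
def incCountAbs {α : Type*} (S : Finset α) (T : Finset (Set α)) : ℕ :=
  ∑ t ∈ T, (↑S ∩ t).ncard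

/-- The number of incidences between a finite set of real points and a finite family of
subsets of `ℂⁿ`. -/
def incCount (S : Finset (Fin n → ℝ)) (T : Finset (Set (Fin n → ℂ))) : ℕ :=
  ∑ t ∈ T, (↑S ∩ toC n ⁻¹' t).ncard

/-- The total degree `deg T = ∑_{t ∈ T} deg t` of a finite family of algebraic sets. -/
def degFamily (T : Finset (Set (Fin n → ℂ))) : ℕ := ∑ t ∈ T, degreeSum n t

/-- The total degree of a finite family of irreducible varieties. -/
def degFamilyIrred (T : Finset (Set (Fin n → ℂ))) : ℕ := ∑ t ∈ T, degree n t

/-- `α_k(d)`. -/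
def alpha (k d : ℕ) : ℝ :=
  if k = 1 ∧ d = 1 then 0 else (k : ℝ) * ((d : ℝ) - 1) / ((d : ℝ) * (k : ℝ) - 1)

/-- `β_k(d)`. -/
def beta (k d : ℕ) : ℝ :=
  if k = 1 ∧ d = 1 then 1 else (d : ℝ) * ((k : ℝ) - 1) / ((d : ℝ) * (k : ℝ) - 1)

/-- `τ_d(b,k) = b^{1-β_k(d)} k^{1-α_k(d)}`. -/
def tauC (d b k : ℕ) : ℝ := (b : ℝ) ^ (1 - beta k d) * (k : ℝ) ^ (1 - alpha k d)

/-- The Chardin–Philippon property of the constant `c₀`: for every pure-dimensional algebraic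
set `W ⊆ ℂⁿ` and every `m ≥ 2 (n - dim W) δ(W)` one has `H_{I(W)}(m) ≥ c₀ m^{dim W} deg W`. -/
def ChardinPhilippon (c0 : ℝ) : Prop :=
  ∀ (W : Set (Fin n → ℂ)) (e : ℕ), IsAlgSetOfDim n W e →
    ∀ m : ℕ, 2 * (n - e) * deltaSet n W ≤ m →
      c0 * (m : ℝ) ^ e * (degreeSum n W : ℝ) ≤ (hilbert n W m : ℝ)

/-- The defining property of the constant `c₁`: for every irreducible variety `V`, every
positive integer lies in some interval `ℛ_i(V)` with `i` admissible with respect to `V`. -/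
def CoversPositiveIntegers (c0 c1 : ℝ) : Prop :=
  ∀ V : Set (Fin n → ℂ), IsIrredVariety n V →
    ∀ m : ℕ, 0 < m → ∃ i, Admissible n V i ∧ (m : ℝ) ∈ RSet n c0 c1 V i

/-- `i_V(M)`: the smallest admissible `i` such that `M^{n-i} Δ_i(V) ∈ ℛ_i(V)`. -/
def iV (c0 c1 : ℝ) (V : Set (Fin n → ℂ)) (M : ℕ) : ℕ :=
  sInf {i | Admissible n V i ∧ (M : ℝ) ^ (n - i) * Delta n V i ∈ RSet n c0 c1 V i}

/-- A real polynomial bisects a finite set `S ⊆ ℝⁿ` if it is positive on at most half of `S`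
and negative on at most half of `S`. -/
def Bisects (g : MvPolynomial (Fin n) ℝ) (S : Finset (Fin n → ℝ)) : Prop :=
  ((↑S ∩ {x | 0 < eval x g}).ncard : ℝ) ≤ (S.card : ℝ) / 2 ∧
    ((↑S ∩ {x | eval x g < 0}).ncard : ℝ) ≤ (S.card : ℝ) / 2

/-- The set of `r`-rich points of a family `T`: points lying in at least `r` members of `T`. -/
def richPts (T : Finset (Set (Fin n → ℂ))) (r : ℕ) : Set (Fin n → ℂ) :=
  {x | r ≤ ({t | t ∈ T ∧ x ∈ t} : Set (Set (Fin n → ℂ))).ncard}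

/-- A real hypersurface of degree at most `D`: the real zero set of a nonzero real polynomial
of degree at most `D`. -/
def IsRealHypersurfaceDegLE (t : Set (Fin n → ℝ)) (D : ℕ) : Prop :=
  ∃ p : MvPolynomial (Fin n) ℝ, p ≠ 0 ∧ t = zeroSetR n p ∧ p.totalDegree ≤ D

/-- Lexicographic comparison of the tuples `(f 1, …, f m)` and `(g 1, …, g m)`. -/
def LexLE (m : ℕ) (f g : ℕ → ℕ) : Prop :=
  (∀ j ∈ Finset.Icc 1 m, f j = g j) ∨
    ∃ i ∈ Finset.Icc 1 m, (∀ j, 1 ≤ j → j < i → f j = g j) ∧ f i < g i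



end Paper

namespace Paper
set_option linter.unusedSectionVars false
set_option linter.unusedSimpArgs false
section Wiebe
variable {k : Type*} [Field k] {ι : Type*} [Fintype ι] [DecidableEq ι]

lemma mem_span_pow_iff (N : ℕ) (S : Set ι) (g : MvPolynomial ι k) :
    g ∈ Ideal.span ((fun i : ι => (X i : MvPolynomial ι k) ^ (N+1)) '' S) ↔
      ∀ a ∈ g.support, ∃ i ∈ S, N + 1 ≤ a i := by
  have := @mem_ideal_span_monomial_image ι k _ g ((fun i : ι => Finsupp.single i (N+1)) '' S)
  rw [Set.image_image] at this
  simp only [Set.exists_mem_image, Finsupp.single_le_iff] at this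
  rw [← this]
  simp only [X_pow_eq_monomial]

lemma nzd_pow (N : ℕ) (j : ι) (g : MvPolynomial ι k)
    (h : X j * g ∈ Ideal.span ((fun i : ι => (X i : MvPolynomial ι k) ^ (N+1)) '' {j}ᶜ)) :
    g ∈ Ideal.span ((fun i : ι => (X i : MvPolynomial ι k) ^ (N+1)) '' {j}ᶜ) := by
  rw [mem_span_pow_iff] at *
  intro a ha
  obtain ⟨i, hi, h2⟩ := h (Finsupp.single j 1 + a) (by
    rw [mem_support_iff, coeff_X_mul]; exact mem_support_iff.1 ha)
  refine ⟨i, hi, ?_⟩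
  have : j ≠ i := fun h => hi (by simp [h])
  simpa [Finsupp.single_apply, this] using h2

lemma cramer_mem {R : Type*} [CommRing R] (M : Matrix ι ι R) (u v : ι → R)
    (h : ∀ i, ∑ j, M i j * u j = v i) (I : Ideal R) (hv : ∀ i, v i ∈ I) (j : ι) :
    M.det * u j ∈ I := by
  have h1 : M.mulVec u = v := by ext i; simp [Matrix.mulVec, dotProduct, h]
  have h2 : M.adjugate.mulVec v = M.det • u := by
    rw [← h1, Matrix.mulVec_mulVec, Matrix.adjugate_mul, Matrix.smul_mulVec, Matrix.one_mulVec]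
  have h3 := congrFun h2 j
  simp only [Matrix.mulVec, dotProduct, Pi.smul_apply, smul_eq_mul] at h3
  rw [← h3]
  exact Ideal.sum_mem _ fun i _ => I.mul_mem_left _ (hv i)

lemma det_congr_mod (N : ℕ) (v : ι → MvPolynomial ι k) (M D : Matrix ι ι (MvPolynomial ι k))
    (hv : ∀ i, (X i : MvPolynomial ι k) ^ (N+1) ∣ v i)
    (hM : ∀ i, ∑ j, M i j * X j = v i) (hD : ∀ i, ∑ j, D i j * X j = v i) :
    D.det - M.det ∈ Ideal.span (Set.range (fun i : ι => (X i : MvPolynomial ι k) ^ (N+1))) := by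
  set I := Ideal.span (Set.range (fun i : ι => (X i : MvPolynomial ι k) ^ (N+1))) with hI
  let Q : Finset ι → Matrix ι ι (MvPolynomial ι k) := fun S i => if i ∈ S then D i else M i
  have hQ : ∀ S i, ∑ j, Q S i j * X j = v i := by
    intro S i
    by_cases h : i ∈ S <;> simp [Q, h, hM, hD]
  have key : ∀ S : Finset ι, (Q S).det - M.det ∈ I := by
    intro S
    induction S using Finset.induction_on with
    | empty => simp [Q]
    | insert a S ha ih =>
      have e1 : Q (insert a S) = (Q S).updateRow a (D a) := by
        refine Matrix.ext fun i j => ?_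
        rw [Matrix.updateRow_apply]
        by_cases h : i = a
        · subst h; simp [Q]
        · simp [Q, h]
      have e2 : Q S = (Q S).updateRow a (M a) := by
        refine Matrix.ext fun i j => ?_
        rw [Matrix.updateRow_apply]
        by_cases h : i = a
        · subst h; simp [Q, ha]
        · simp [h]
      have e3 : (Q (insert a S)).det = (Q S).det + ((Q S).updateRow a (D a - M a)).det := by
        conv_rhs => rw [e2]
        rw [Matrix.updateRow_idem, ← Matrix.det_updateRow_add, e1]
        simp
      have e4 : ((Q S).updateRow a (D a - M a)).det ∈
          Ideal.span ((fun i : ι => (X i : MvPolynomial ι k) ^ (N+1)) '' {a}ᶜ) := by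
        apply nzd_pow
        rw [mul_comm]
        refine cramer_mem _ (fun j => X j) (fun i => if i = a then 0 else v i) ?_ _ ?_ a
        · intro i
          by_cases h : i = a
          · subst h
            simp [Matrix.updateRow_self, sub_mul, Finset.sum_sub_distrib, hM, hD]
          · simp [Matrix.updateRow_ne h, h, hQ]
        · intro i
          by_cases h : i = a
          · simp [h]
          · simp only [h, if_false]
            exact Ideal.mem_of_dvd _ (hv i) (Ideal.subset_span ⟨i, by simpa using h, rfl⟩)
      have e5 : ((Q S).updateRow a (D a - M a)).det ∈ I :=
        Ideal.span_mono (Set.image_subset_range _ _) e4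
      rw [e3, add_sub_right_comm]
      exact I.add_mem ih e5
  have : Q Finset.univ = D := by ext i j; simp [Q]
  simpa [this] using key Finset.univ

/-- Core of Wiebe's theorem at the origin. -/
lemma wiebe_zero (N : ℕ) (s σ : MvPolynomial ι k) (hs : constantCoeff s ≠ 0)
    (hσ : constantCoeff σ ≠ 0) (M : Matrix ι ι (MvPolynomial ι k))
    (hM : ∀ i, ∑ j, M i j * X j = s * X i ^ (N+1)) :
    σ * M.det ∉ Ideal.span (Set.range (fun i : ι => (X i : MvPolynomial ι k) ^ (N+1))) := by
  intro h
  set I := Ideal.span (Set.range (fun i : ι => (X i : MvPolynomial ι k) ^ (N+1))) with hI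
  have h1 := det_congr_mod N (fun i => s * X i ^ (N+1)) M (Matrix.diagonal fun i => s * X i ^ N)
    (fun i => Dvd.intro_left _ rfl) hM (by
      intro i
      simp [Matrix.diagonal_apply, pow_succ, mul_assoc])
  have h2 : (σ * s ^ Fintype.card ι) * ∏ i, (X i : MvPolynomial ι k) ^ N ∈ I := by
    have := I.add_mem (I.mul_mem_left σ h1) h
    rw [mul_sub, sub_add_cancel, Matrix.det_diagonal, Finset.prod_mul_distrib, Finset.prod_const,
      ← mul_assoc] at this
    exact this
  have hm : ∏ i, (X i : MvPolynomial ι k) ^ N = monomial (∑ i, Finsupp.single i N) 1 := by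
    simp [X_pow_eq_monomial, monomial_sum_one]
  rw [hI, ← Set.image_univ, mem_span_pow_iff] at h2
  obtain ⟨i, -, hi⟩ := h2 (∑ i, Finsupp.single i N) (by
    rw [mem_support_iff, hm]
    have := coeff_mul_monomial (0 : ι →₀ ℕ) (∑ i, Finsupp.single i N) (1:k) (σ * s ^ Fintype.card ι)
    rw [zero_add] at this
    rw [this, mul_one]
    have e : coeff 0 (σ * s ^ Fintype.card ι) = constantCoeff σ * constantCoeff s ^ Fintype.card ι := by
      rw [← constantCoeff_eq]; simp
    rw [e]
    exact mul_ne_zero hσ (pow_ne_zero _ hs))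
  rw [Finsupp.finsetSum_apply] at hi
  simp [Finsupp.single_apply] at hi

/-- Translation. -/
noncomputable def trans (p : ι → k) : MvPolynomial ι k →ₐ[k] MvPolynomial ι k :=
  aeval fun j => X j + C (p j)

lemma constantCoeff_trans (p : ι → k) (f : MvPolynomial ι k) :
    constantCoeff (trans p f) = eval p f := by
  have : (constantCoeff.comp (trans p).toRingHom : MvPolynomial ι k →+* k) = eval p := by
    apply MvPolynomial.ringHom_ext
    · intro r; simp [trans]
    · intro i; simp [trans]
  exact congrArg (fun h => h f) this

lemma wiebe (f : ι → MvPolynomial ι k) (p : ι → k)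
    (hiso : ∀ j, ∃ s N, eval p s ≠ 0 ∧ s * (X j - C (p j)) ^ N ∈ Ideal.span (Set.range f))
    (M : Matrix ι ι (MvPolynomial ι k))
    (hM : ∀ i, ∑ j, M i j * (X j - C (p j)) = f i) (σ : MvPolynomial ι k) (hσ : eval p σ ≠ 0) :
    σ * M.det ∉ Ideal.span (Set.range f) := by
  intro h
  choose s N hs hN using hiso
  -- uniform
  let N' := ∑ j, N j
  let S := ∏ j, s j
  have hS : eval p S ≠ 0 := by
    simp only [S, map_prod]; exact Finset.prod_ne_zero_iff.2 fun j _ => hs j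
  have hN' : ∀ j, S * (X j - C (p j)) ^ (N' + 1) ∈ Ideal.span (Set.range f) := by
    intro j
    have h1 : s j ∣ S := Finset.dvd_prod_of_mem _ (Finset.mem_univ j)
    have h2 : N j ≤ N' + 1 := (Finset.single_le_sum (fun _ _ => Nat.zero_le _)
      (Finset.mem_univ j) : N j ≤ N').trans (Nat.le_succ _)
    exact Ideal.mem_of_dvd _ (mul_dvd_mul h1 (pow_dvd_pow _ h2)) (hN j)
  have hL : ∀ i, ∃ c : ι → MvPolynomial ι k,
      ∑ j, c j * f j = S * (X i - C (p i)) ^ (N' + 1) := by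
    intro i
    obtain ⟨c, hc⟩ := (Ideal.mem_span_range_iff_exists_fun).1 (hN' i)
    exact ⟨c, hc⟩
  choose L hL using hL
  let L' : Matrix ι ι (MvPolynomial ι k) := L
  -- product matrix
  have hprod : ∀ i, ∑ j, (L' * M) i j * (X j - C (p j)) = S * (X i - C (p i)) ^ (N' + 1) := by
    intro i
    rw [← hL i]
    simp only [Matrix.mul_apply, Finset.sum_mul, ← hM, Finset.mul_sum]
    rw [Finset.sum_comm]
    simp [L', mul_assoc]
  have hdet : ∀ g ∈ Ideal.span (Set.range f),
      L'.det * g ∈ Ideal.span (Set.range fun i => (X i - C (p i)) ^ (N' + 1)) := by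
    intro g hg
    induction hg using Submodule.span_induction with
    | mem x hx =>
      obtain ⟨j, rfl⟩ := hx
      refine cramer_mem L' f _ hL _ (fun i => ?_) j
      exact Ideal.mul_mem_left _ _ (Ideal.subset_span ⟨i, rfl⟩)
    | zero => simp
    | add x y _ _ hx hy => rw [mul_add]; exact Ideal.add_mem _ hx hy
    | smul a x _ hx =>
      rw [smul_eq_mul, mul_left_comm]; exact Ideal.mul_mem_left _ _ hx
  have h3 : σ * (L' * M).det ∈ Ideal.span (Set.range fun i => (X i - C (p i)) ^ (N' + 1)) := by
    have := hdet _ h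
    rwa [mul_left_comm, ← Matrix.det_mul] at this
  -- translate
  have tX : ∀ j, trans p (X j - C (p j)) = X j := by intro j; simp [trans]
  have h4 := Ideal.mem_map_of_mem (trans p) h3
  rw [Ideal.map_span, ← Set.range_comp] at h4
  refine wiebe_zero N' (trans p S) (trans p σ) ?_ ?_ ((trans p).mapMatrix (L' * M)) ?_ ?_
  · rwa [constantCoeff_trans]
  · rwa [constantCoeff_trans]
  · intro i
    have := congrArg (trans p) (hprod i)
    rw [map_sum] at this
    simp only [map_mul, map_pow, tX] at this
    rw [← this]
    simp
  · rw [← AlgHom.map_det, ← map_mul]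
    convert h4 using 3
    ext1 i
    simp only [Function.comp, map_pow, tX]
end Wiebe
end Paper

namespace Paper
section Bez
variable {k : Type*} [Field k] {n : ℕ}

lemma bez_monomial (a : Fin n →₀ ℕ) :
    ∃ b : Fin n → MvPolynomial (Fin n) (MvPolynomial (Fin n) k),
      ∑ j, b j * (C (X j) - X j) = C (monomial a (1:k)) - monomial a 1 ∧
      ∀ j, (b j).totalDegree ≤ a.sum fun _ e => e := by
  classical
  induction a using Finsupp.induction_linear with
  | zero => exact ⟨0, by simp, by simp⟩
  | add f g hf hg =>
    obtain ⟨b, hb, hbd⟩ := hf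
    obtain ⟨c, hc, hcd⟩ := hg
    refine ⟨fun j => C (monomial g 1) * b j + monomial f 1 * c j, ?_, ?_⟩
    · have : ∀ m : Fin n →₀ ℕ, (monomial (f + g) (1:k)) = monomial f 1 * monomial g 1 := by
        intro _; simp [monomial_mul]
      have e2 : (monomial (f + g) (1:MvPolynomial (Fin n) k)) = monomial f 1 * monomial g 1 := by
        simp [monomial_mul]
      rw [this 0, e2]
      simp only [add_mul, Finset.sum_add_distrib, mul_assoc, ← Finset.mul_sum, hb, hc, map_mul]
      ring
    · intro j
      rw [Finsupp.sum_add_index' (by simp) (by simp)]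
      refine (totalDegree_add _ _).trans (max_le ?_ ?_)
      · refine (totalDegree_mul _ _).trans ?_
        rw [totalDegree_C, zero_add]
        exact (hbd j).trans (Nat.le_add_right _ _)
      · refine (totalDegree_mul _ _).trans ?_
        exact Nat.add_le_add (totalDegree_monomial_le _ _) (hcd j)
  | single i e =>
    induction e with
    | zero => exact ⟨0, by simp, by simp⟩
    | succ e ih =>
      obtain ⟨b, hb, hbd⟩ := ih
      refine ⟨fun j => C (X i) * b j + if j = i then monomial (Finsupp.single i e) 1 else 0, ?_, ?_⟩
      · have e1 : ∀ (R : Type _) [CommRing R], (monomial (Finsupp.single i (e+1)) (1:R)) = monomial (Finsupp.single i e) 1 * X i := by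
          intro R _; simp [X, monomial_mul]
        rw [e1, e1]
        simp only [add_mul, Finset.sum_add_distrib, mul_assoc, ← Finset.mul_sum, hb, map_mul,
          ite_mul, zero_mul, Finset.sum_ite_eq', Finset.mem_univ, if_true]
        ring
      · intro j
        refine (totalDegree_add _ _).trans (max_le ?_ ?_)
        · refine (totalDegree_mul _ _).trans ?_
          rw [totalDegree_C, zero_add]
          refine (hbd j).trans ?_
          rw [Finsupp.sum_single_index rfl, Finsupp.sum_single_index rfl]
          exact Nat.le_succ _
        · split_ifs
          · refine (totalDegree_monomial_le _ _).trans ?_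
            rw [Finsupp.sum_single_index rfl, Finsupp.sum_single_index rfl]
            exact Nat.le_succ _
          · simp

lemma bez_exists (f : MvPolynomial (Fin n) k) :
    ∃ b : Fin n → MvPolynomial (Fin n) (MvPolynomial (Fin n) k),
      ∑ j, b j * (C (X j) - X j) = C f - map C f ∧
      ∀ j, (b j).totalDegree ≤ f.totalDegree := by
  classical
  choose b hb hbd using fun a : Fin n →₀ ℕ => bez_monomial (k := k) a
  refine ⟨fun j => ∑ a ∈ f.support, C (C (coeff a f)) * b a j, ?_, ?_⟩
  · conv_rhs => rw [f.as_sum]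
    simp only [Finset.sum_mul]
    rw [Finset.sum_comm]
    simp only [mul_assoc, ← Finset.mul_sum, hb, map_sum, ← Finset.sum_sub_distrib]
    refine Finset.sum_congr rfl fun a _ => ?_
    rw [mul_sub, ← map_mul, C_mul_monomial, map_monomial, C_mul_monomial, mul_one, mul_one]
  · intro j
    refine totalDegree_finsetSum_le fun a ha => ?_
    refine (totalDegree_mul _ _).trans ?_
    rw [totalDegree_C, zero_add]
    exact (hbd a j).trans (le_totalDegree ha)

lemma totalDegree_det_le {R : Type*} [CommRing R] {σ : Type*} (M : Matrix (Fin n) (Fin n) (MvPolynomial σ R))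
    (δ : ℕ) (h : ∀ i j, (M i j).totalDegree ≤ δ) : M.det.totalDegree ≤ n * δ := by
  rw [Matrix.det_apply]
  refine totalDegree_finsetSum_le fun π _ => ?_
  refine (totalDegree_smul_le _ _).trans ?_
  refine (totalDegree_finsetProd _ _).trans ?_
  refine (Finset.sum_le_sum fun i _ => h _ _).trans ?_
  simp

/-- apply a linear functional to the coefficients -/
noncomputable def applyCoeff (φ : MvPolynomial (Fin n) k →ₗ[k] k)
    (B : MvPolynomial (Fin n) (MvPolynomial (Fin n) k)) : MvPolynomial (Fin n) k :=
  ∑ a ∈ B.support, monomial a (φ (coeff a B))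

lemma eval_applyCoeff (φ : MvPolynomial (Fin n) k →ₗ[k] k)
    (B : MvPolynomial (Fin n) (MvPolynomial (Fin n) k)) (q : Fin n → k) :
    eval q (applyCoeff φ B) = φ (eval (fun j => C (q j)) B) := by
  rw [applyCoeff, map_sum, eval_eq, map_sum]
  refine Finset.sum_congr rfl fun a _ => ?_
  rw [eval_monomial]
  have : coeff a B * ∏ i ∈ a.support, (C (q i) : MvPolynomial (Fin n) k) ^ a i =
      (∏ i ∈ a.support, q i ^ a i) • coeff a B := by
    rw [smul_eq_C_mul, map_prod, mul_comm]; simp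
  rw [this, map_smul, smul_eq_mul, mul_comm]; rfl

lemma totalDegree_applyCoeff (φ : MvPolynomial (Fin n) k →ₗ[k] k)
    (B : MvPolynomial (Fin n) (MvPolynomial (Fin n) k)) :
    (applyCoeff φ B).totalDegree ≤ B.totalDegree := by
  refine totalDegree_finsetSum_le fun a ha => ?_
  exact (totalDegree_monomial_le _ _).trans (le_totalDegree ha)

/-- Isolated zeros of `n` polynomials of degree at most `δ` are separated by polynomials of
degree at most `n δ`. -/
lemma sep_isolated (f : Fin n → MvPolynomial (Fin n) k) (δ : ℕ) (hδ : ∀ i, (f i).totalDegree ≤ δ)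
    (T : Set (Fin n → k)) (hT : ∀ p ∈ T, ∀ i, eval p (f i) = 0) (p : Fin n → k) (hpT : p ∈ T)
    (hiso : ∀ j, ∃ s N, eval p s ≠ 0 ∧ s * (X j - C (p j)) ^ N ∈ Ideal.span (Set.range f)) :
    ∃ h : MvPolynomial (Fin n) k, h.totalDegree ≤ n * δ ∧ eval p h = 1 ∧
      ∀ q ∈ T, q ≠ p → eval q h = 0 := by
  choose b hb hbd using fun i => bez_exists (f i)
  let Bz : Matrix (Fin n) (Fin n) (MvPolynomial (Fin n) (MvPolynomial (Fin n) k)) := b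
  let ev : (Fin n → k) → MvPolynomial (Fin n) (MvPolynomial (Fin n) k) →+* MvPolynomial (Fin n) k :=
    fun q => eval (fun j => C (q j))
  have hev : ∀ q ∈ T, ∀ i, ∑ j, (ev q).mapMatrix Bz i j * (X j - C (q j)) = f i := by
    intro q hq i
    have h1 := congrArg (ev q) (hb i)
    have h2 : ev q (map C (f i)) = 0 := by
      have : (ev q).comp (map C) = C.comp (eval q) := by
        apply MvPolynomial.ringHom_ext
        · intro r; simp [ev]
        · intro i; simp [ev]
      have h3 := congrArg (fun h => h (f i)) this
      simp only [RingHom.comp_apply, hT q hq i, map_zero] at h3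
      exact h3
    rw [map_sub, h2, sub_zero] at h1
    have e0 : ∀ j, (ev q).mapMatrix Bz i j = ev q (b i j) := fun j => rfl
    simp only [e0]
    simpa [ev, map_sum] using h1
  let I := Ideal.span (Set.range f)
  let Q : Submodule k (MvPolynomial (Fin n) k) :=
    { carrier := {g | ∃ s, eval p s ≠ 0 ∧ s * g ∈ I}
      zero_mem' := ⟨1, by simp, by simp⟩
      add_mem' := by
        rintro g g' ⟨s, hs, h⟩ ⟨s', hs', h'⟩
        refine ⟨s * s', by simp [hs, hs'], ?_⟩
        have : s * s' * (g + g') = s' * (s * g) + s * (s' * g') := by ring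
        rw [this]
        exact I.add_mem (I.mul_mem_left _ h) (I.mul_mem_left _ h')
      smul_mem' := by
        rintro c g ⟨s, hs, h⟩
        refine ⟨s, hs, ?_⟩
        rw [smul_eq_C_mul, mul_left_comm]
        exact I.mul_mem_left _ h }
  have hdet : ∀ q, ev q Bz.det = ((ev q).mapMatrix Bz).det := fun q => RingHom.map_det _ _
  have hnot : ev p Bz.det ∉ Q := by
    rintro ⟨s, hs, h⟩
    rw [hdet] at h
    exact wiebe f p hiso _ (hev p hpT) s hs h
  obtain ⟨φ, hφ1, hφ2⟩ := Submodule.exists_le_ker_of_notMem hnot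
  refine ⟨applyCoeff ((φ (ev p Bz.det))⁻¹ • φ) Bz.det, ?_, ?_, ?_⟩
  · refine (totalDegree_applyCoeff _ _).trans (totalDegree_det_le _ _ fun i j => ?_)
    exact (hbd i j).trans (hδ i)
  · rw [eval_applyCoeff]
    exact inv_mul_cancel₀ hφ1
  · intro q hq hne
    rw [eval_applyCoeff]
    obtain ⟨j, hj⟩ := Function.ne_iff.1 hne
    have : ev q Bz.det ∈ Q := by
      refine ⟨X j - C (q j), ?_, ?_⟩
      · simpa [sub_eq_zero] using hj.symm
      · rw [mul_comm, hdet]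
        exact cramer_mem _ (fun j => X j - C (q j)) f (hev q hq) I
          (fun i => Ideal.subset_span ⟨i, rfl⟩) j
    have h0 : φ (ev q Bz.det) = 0 := hφ2 this
    change _ * φ (ev q Bz.det) = 0
    rw [h0, mul_zero]
end Bez
end Paper

namespace Paper

lemma exists_mul_pow_mem {R : Type*} [CommRing R] {I m : Ideal R} (hm : m ∈ I.minimalPrimes)
    {x : R} (hx : x ∈ m) : ∃ s N, s ∉ m ∧ s * x ^ N ∈ I := by
  have hp : m.IsPrime := hm.1.1
  by_contra hcon
  push Not at hcon
  let S : Submonoid R := m.primeCompl ⊔ Submonoid.powers x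
  have hS : Disjoint (I : Set R) (S : Set R) := by
    rw [Set.disjoint_left]
    intro y hy hyS
    obtain ⟨s, hs, z, ⟨N, rfl⟩, rfl⟩ := Submonoid.mem_sup.1 hyS
    exact hcon s N hs hy
  obtain ⟨q, hq, hIq, hdis⟩ := Ideal.exists_le_prime_disjoint I S hS
  rw [Set.disjoint_left] at hdis
  have hqm : q ≤ m := by
    intro y hy
    by_contra hym
    exact hdis hy (Submonoid.mem_sup_left hym)
  exact hdis (hm.2 ⟨hq, hIq⟩ hqm hx) (Submonoid.mem_sup_right ⟨1, pow_one x⟩)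

section Sel
variable {k : Type*} [Field k] [Infinite k] {R : Type*} [CommRing R] [Algebra k R]
  [IsNoetherianRing R]

lemma avoid_primes (G : Set R) (F : Set (Ideal R)) (hF : F.Finite)
    (h : ∀ q ∈ F, ¬ G ⊆ (q : Set R)) :
    ∃ f ∈ Submodule.span k G, ∀ q ∈ F, f ∉ q := by
  classical
  let E := Submodule.span k G
  let s : Finset (Subspace k E) := hF.toFinset.image fun q =>
    (q.restrictScalars k).comap E.subtype
  have hs : ⊤ ∉ s := by
    intro h1
    obtain ⟨q, hq, h2⟩ := Finset.mem_image.1 h1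
    refine h q (by simpa using hq) fun g hg => ?_
    have : (⟨g, Submodule.subset_span hg⟩ : E) ∈ (q.restrictScalars k).comap E.subtype := by
      rw [h2]; trivial
    simpa using this
  have h3 := Subspace.biUnion_ne_univ_of_top_notMem hs
  obtain ⟨x, hx⟩ := (Set.ne_univ_iff_exists_notMem _).1 h3
  refine ⟨x, x.2, fun q hq hxq => hx ?_⟩
  simp only [Set.mem_iUnion]
  exact ⟨_, Finset.mem_image_of_mem _ (by simpa using hq), by simpa using hxq⟩

lemma select_aux (G : Set R) (T : Set (Ideal R)) 
    (hT : ∀ m ∈ T, m ∈ (Ideal.span G).minimalPrimes) (i : ℕ) :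
    ∃ f : Fin i → R, (∀ j, f j ∈ Submodule.span k G) ∧
      ∀ m ∈ T, ∀ q : Ideal R, q.IsPrime → Ideal.span (Set.range f) ≤ q → q < m →
        (i : ℕ∞) ≤ q.height := by
  induction i with
  | zero => exact ⟨Fin.elim0, fun j => j.elim0, by simp⟩
  | succ i ih =>
    obtain ⟨f, hf, hq⟩ := ih
    let F : Set (Ideal R) := {q | q ∈ (Ideal.span (Set.range f)).minimalPrimes ∧ ∃ m ∈ T, q < m}
    have hF : F.Finite := (Ideal.finite_minimalPrimes_of_isNoetherianRing R _).subset
      fun q h => h.1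
    obtain ⟨g, hg, hgF⟩ := avoid_primes (k := k) G F hF (by
      rintro q ⟨h1, m, hm, hlt⟩ hG
      have hGq : Ideal.span G ≤ q := Ideal.span_le.2 hG
      exact absurd ((hT m hm).2 ⟨h1.1.1, hGq⟩ hlt.le) (not_le_of_gt hlt))
    refine ⟨Fin.snoc f g, ?_, ?_⟩
    · intro j
      refine Fin.lastCases ?_ (fun j => ?_) j
      · simpa using hg
      · simpa using hf j
    · intro m hm q hqp hle hlt
      have h1 : Ideal.span (Set.range f) ≤ q := by
        refine le_trans (Ideal.span_mono ?_) hle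
        rintro _ ⟨j, rfl⟩
        exact ⟨j.castSucc, by simp⟩
      have h2 : g ∈ q := hle (Ideal.subset_span ⟨Fin.last i, by simp⟩)
      obtain ⟨q0, hq0, hq0q⟩ := Ideal.exists_minimalPrimes_le h1
      have hp0 : q0.IsPrime := hq0.1.1
      have hlt0 : q0 < q := lt_of_le_of_ne hq0q (by
        rintro rfl
        exact hgF q0 ⟨hq0, m, hm, hlt⟩ h2)
      have h3 := hq m hm q0 hp0 hq0.1.2 (hlt0.trans hlt)
      have h4 := Ideal.height_add_one_le_of_lt_of_isPrime hlt0
      push_cast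
      exact (add_le_add_left h3 1).trans h4
end Sel

lemma sep_minimal {k : Type*} [Field k] [Infinite k] {n : ℕ} (G : Set (MvPolynomial (Fin n) k))
    (δ : ℕ) (hδ : ∀ g ∈ G, g.totalDegree ≤ δ) (T : Set (Fin n → k))
    (hT : ∀ p ∈ T, RingHom.ker (eval p) ∈ (Ideal.span G).minimalPrimes) (p : Fin n → k)
    (hp : p ∈ T) :
    ∃ h : MvPolynomial (Fin n) k, h.totalDegree ≤ n * δ ∧ eval p h = 1 ∧
      ∀ q ∈ T, q ≠ p → eval q h = 0 := by
  obtain ⟨f, hf, hq⟩ := select_aux (k := k) G ((fun p => RingHom.ker (eval p)) '' T)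
    (by rintro _ ⟨p, hp, rfl⟩; exact hT p hp) n
  have hfG : ∀ i, f i ∈ Ideal.span G := fun i =>
    (Submodule.span_le_restrictScalars k (MvPolynomial (Fin n) k) G) (hf i)
  refine sep_isolated f δ ?_ T ?_ p hp ?_
  · intro i
    have : Submodule.span k G ≤ restrictTotalDegree (Fin n) k δ := by
      rw [Submodule.span_le]
      intro g hg
      exact (mem_restrictTotalDegree _ _ _).2 (hδ g hg)
    exact (mem_restrictTotalDegree _ _ _).1 (this (hf i))
  · intro p hp i
    exact (hT p hp).1.2 (hfG i)
  · have hmin : RingHom.ker (eval p) ∈ (Ideal.span (Set.range f)).minimalPrimes := by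
      have hpr : (RingHom.ker (eval p)).IsPrime := (hT p hp).1.1
      refine ⟨⟨hpr, ?_⟩, ?_⟩
      · rw [Ideal.span_le]; rintro _ ⟨i, rfl⟩
        exact (hT p hp).1.2 (hfG i)
      · rintro q ⟨hqp, hle⟩ hqm
        by_contra hnot
        have hlt : q < RingHom.ker (eval p) := lt_of_le_not_ge hqm hnot
        have h1 := hq _ ⟨p, hp, rfl⟩ q hqp hle hlt
        have h2 := Ideal.height_add_one_le_of_lt_of_isPrime hlt
        have h3 := Ideal.height_le_ringKrullDim_of_isPrime (I := RingHom.ker (eval p))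
        rw [MvPolynomial.ringKrullDim_of_isNoetherianRing] at h3
        simp only [ringKrullDim_eq_zero_of_field, Nat.card_fin, zero_add] at h3
        have h4 : ((n : ℕ∞) + 1) ≤ (RingHom.ker (eval p)).height := (add_le_add_left h1 1).trans h2
        have h5 : (((n : ℕ∞) + 1 : ℕ∞) : WithBot ℕ∞) ≤ ((n : ℕ∞) : WithBot ℕ∞) := 
          (WithBot.coe_le_coe.2 h4).trans h3
        have h6 : ((n+1 : ℕ) : ℕ∞) ≤ n := by exact_mod_cast WithBot.coe_le_coe.1 h5
        have := Nat.cast_le.1 h6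
        omega
    intro j
    obtain ⟨s, N, hs, h⟩ := exists_mul_pow_mem hmin (x := X j - C (p j)) (by simp [RingHom.mem_ker])
    exact ⟨s, N, by simpa [RingHom.mem_ker] using hs, h⟩
end Paper

namespace Paper
section NN
set_option linter.unusedSimpArgs false

lemma coeff_aeval_line {σ : Type*} [Fintype σ] (v : σ → ℂ) (F : MvPolynomial σ ℂ) (N : ℕ) :
    (aeval (fun i => Polynomial.C (v i) * Polynomial.X) F : Polynomial ℂ).coeff N
      = ∑ b ∈ F.support with b.degree = N, F.coeff b * ∏ i, v i ^ b i := by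
  rw [aeval_def, eval₂_eq']
  rw [Polynomial.finsetSum_coeff, Finset.sum_filter]
  refine Finset.sum_congr rfl fun b _ => ?_
  have : (algebraMap ℂ (Polynomial ℂ)) (coeff b F) * ∏ i, (Polynomial.C (v i) * Polynomial.X) ^ b i
      = Polynomial.C (coeff b F * ∏ i, v i ^ b i) * Polynomial.X ^ b.degree := by
    simp only [mul_pow, Finset.prod_mul_distrib, Finset.prod_pow_eq_pow_sum, Finsupp.degree_eq_sum]
    simp [Polynomial.C_mul, mul_assoc]
  rw [this, Polynomial.coeff_C_mul, Polynomial.coeff_X_pow]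
  simp [eq_comm]

lemma exists_good_dir {e : ℕ} (F : MvPolynomial (Fin (e+1)) ℂ) (hF : F ≠ 0) :
    ∃ c : Fin e → ℂ, (aeval (fun i => Polynomial.C ((Fin.cons 1 c : Fin (e+1) → ℂ) i) * Polynomial.X) F : Polynomial ℂ).coeff F.totalDegree ≠ 0 := by
  set N := F.totalDegree with hN
  have h0 : homogeneousComponent N F ≠ 0 := by
    obtain ⟨b, hb, hb2⟩ := F.support.exists_mem_eq_sup (support_nonempty.2 hF) (fun s => s.sum fun _ e => e)
    intro h
    have := congrArg (coeff b) h
    rw [coeff_homogeneousComponent] at this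
    have hd : b.degree = N := by
      rw [hN, totalDegree, hb2, Finsupp.degree_eq_sum, Finsupp.sum_fintype]; simp
    rw [if_pos hd] at this
    exact mem_support_iff.1 hb (by simpa using this)
  have h1 : homogeneousComponent N F * X 0 ≠ 0 := mul_ne_zero h0 (X_ne_zero 0)
  obtain ⟨v, hv⟩ : ∃ v, eval v (homogeneousComponent N F * X 0) ≠ 0 := by
    by_contra! h
    exact h1 (MvPolynomial.funext (by simpa using h))
  simp only [eval_mul, eval_X] at hv
  have hv0 : v 0 ≠ 0 := right_ne_zero_of_mul hv
  have hv1 := left_ne_zero_of_mul hv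
  refine ⟨fun i => v i.succ / v 0, ?_⟩
  rw [coeff_aeval_line]
  rw [homogeneousComponent_apply, map_sum] at hv1
  intro h
  apply hv1
  have : ∀ b ∈ F.support.filter (fun b => b.degree = N), eval v (monomial b (coeff b F)) = v 0 ^ N * (F.coeff b * ∏ i, (Fin.cons 1 (fun i : Fin e => v i.succ / v 0) : Fin (e+1) → ℂ) i ^ b i) := by
    intro b hb
    have hd : b.degree = N := (Finset.mem_filter.1 hb).2
    rw [eval_monomial, ← hd, Finsupp.degree_eq_sum, ← Finset.prod_pow_eq_pow_sum, Finsupp.prod_fintype _ _ (by simp),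
      mul_left_comm, ← Finset.prod_mul_distrib]
    congr 1
    refine Finset.prod_congr rfl fun i _ => ?_
    rw [← mul_pow]
    congr 1
    refine Fin.cases ?_ (fun i => ?_) i
    · simp
    · simp; field_simp
  rw [Finset.sum_congr rfl this, ← Finset.mul_sum, h, mul_zero]

def DegFin {n e : ℕ} (I : Ideal (MvPolynomial (Fin n) ℂ)) (y : Fin e → MvPolynomial (Fin n) ℂ) : Prop :=
  ∃ (N : ℕ) (u : Fin N → MvPolynomial (Fin n) ℂ), ∀ k f, f.totalDegree ≤ k →
    ∃ Φ : Fin N → MvPolynomial (Fin e) ℂ, (∀ s, (Φ s).totalDegree ≤ k) ∧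
      f - ∑ s, u s * aeval y (Φ s) ∈ I

lemma degFin_X {n : ℕ} (I : Ideal (MvPolynomial (Fin n) ℂ)) : DegFin I (X : Fin n → MvPolynomial (Fin n) ℂ) :=
  ⟨1, fun _ => 1, fun k f hf => ⟨fun _ => f, fun _ => hf, by simp⟩⟩

lemma DegFin.mono {n e : ℕ} {I J : Ideal (MvPolynomial (Fin n) ℂ)} {y : Fin e → MvPolynomial (Fin n) ℂ}
    (h : DegFin I y) (hIJ : I ≤ J) : DegFin J y := by
  obtain ⟨N, u, h⟩ := h
  refine ⟨N, u, fun k f hf => ?_⟩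
  obtain ⟨Φ, h1, h2⟩ := h k f hf
  exact ⟨Φ, h1, hIJ h2⟩

lemma DegFin.trans {n e e' : ℕ} {I : Ideal (MvPolynomial (Fin n) ℂ)} {y : Fin e → MvPolynomial (Fin n) ℂ}
    (h : DegFin I y) {J : Ideal (MvPolynomial (Fin e) ℂ)} {z : Fin e' → MvPolynomial (Fin e) ℂ}
    (h' : DegFin J z) (hJ : J ≤ I.comap (aeval y)) : DegFin I (fun i => aeval y (z i)) := by
  obtain ⟨N, u, h⟩ := h
  obtain ⟨N', u', h'⟩ := h'
  refine ⟨N * N', fun s => u (finProdFinEquiv.symm s).1 * aeval y (u' (finProdFinEquiv.symm s).2), fun k f hf => ?_⟩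
  obtain ⟨Φ, h1, h2⟩ := h k f hf
  choose Ψ h3 h4 using fun s => h' k (Φ s) (h1 s)
  refine ⟨fun s => Ψ (finProdFinEquiv.symm s).1 (finProdFinEquiv.symm s).2, fun s => h3 _ _, ?_⟩
  rw [Equiv.sum_comp finProdFinEquiv.symm (fun s : Fin N × Fin N' => u s.1 * aeval y (u' s.2) * aeval (fun i => aeval y (z i)) (Ψ s.1 s.2)), Fintype.sum_prod_type]
  have h5 : ∀ g, aeval (fun i => aeval y (z i)) g = aeval y (aeval z g) := fun g => by
    rw [← AlgHom.comp_apply, comp_aeval]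
  have h6 : ∀ s, u s * aeval y (Φ s) - ∑ r, u s * aeval y (u' r) * aeval (fun i => aeval y (z i)) (Ψ s r) ∈ I := by
    intro s
    have := I.mul_mem_left (u s) (hJ (h4 s))
    convert this using 1
    simp only [map_sub, map_sum, map_mul, mul_sub, Finset.mul_sum, h5, mul_assoc]
  have h7 := I.add_mem h2 (I.sum_mem (t := Finset.univ) (fun s _ => h6 s))
  rw [Finset.sum_sub_distrib] at h7
  convert h7 using 1
  ring

lemma degFin_step {e : ℕ} (F : MvPolynomial (Fin (e+1)) ℂ) (hF : F ≠ 0) :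
    ∃ c : Fin e → ℂ, DegFin (Ideal.span {F}) (fun i => X i.succ - C (c i) * X 0) := by
  obtain ⟨c, hc⟩ := exists_good_dir F hF
  refine ⟨c, ?_⟩
  set N := F.totalDegree with hN
  set t : Fin e → MvPolynomial (Fin (e+1)) ℂ := fun i => X i.succ - C (c i) * X 0 with ht
  set w : Fin (e+1) → MvPolynomial (Fin (e+1)) ℂ := Fin.cons (X 0) t with hw
  set σ : MvPolynomial (Fin (e+1)) ℂ →ₐ[ℂ] MvPolynomial (Fin (e+1)) ℂ :=
    aeval (Fin.cons (X 0) (fun i => X i.succ + C (c i) * X 0)) with hσ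
  have hσw : ∀ f, aeval w (σ f) = f := by
    intro f
    rw [hσ, ← AlgHom.comp_apply, comp_aeval]
    have : (fun i => (aeval w) ((Fin.cons (X 0) (fun i => X i.succ + C (c i) * X 0) : Fin (e+1) → MvPolynomial (Fin (e+1)) ℂ) i)) = X := by
      funext i
      refine Fin.cases ?_ (fun i => ?_) i
      · simp [hw]
      · simp [hw, ht]
    rw [this, aeval_X_left_apply]
  have hσd : ∀ f, (σ f).totalDegree ≤ f.totalDegree := by
    intro f
    rw [hσ, aeval_def, eval₂_eq']
    refine totalDegree_finsetSum_le fun b hb => ?_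
    refine (totalDegree_mul _ _).trans ?_
    have h1 : (algebraMap ℂ (MvPolynomial (Fin (e+1)) ℂ) (coeff b f)).totalDegree = 0 := totalDegree_C _
    rw [h1, zero_add]
    refine (totalDegree_finsetProd _ _).trans ?_
    refine le_trans ?_ (le_totalDegree hb)
    rw [Finsupp.sum_fintype _ _ (by simp)]
    refine Finset.sum_le_sum fun i _ => ?_
    refine (totalDegree_pow _ _).trans ?_
    have : ((Fin.cons (X 0) (fun i => X i.succ + C (c i) * X 0) : Fin (e+1) → MvPolynomial (Fin (e+1)) ℂ) i).totalDegree ≤ 1 := by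
      refine Fin.cases ?_ (fun i => ?_) i
      · simp
      · simp only [Fin.cons_succ]
        refine (totalDegree_add _ _).trans (max_le (by simp) ((totalDegree_mul _ _).trans (by simp)))
    nlinarith
  have hH : coeff (Finsupp.single 0 N) (σ F) ≠ 0 := by
    intro h0
    apply hc
    have h1 : (aeval (fun i => Polynomial.C ((Fin.cons 1 c : Fin (e+1) → ℂ) i) * Polynomial.X) F : Polynomial ℂ)
      = aeval (fun i => Polynomial.C ((Fin.cons 1 0 : Fin (e+1) → ℂ) i) * Polynomial.X) (σ F) := by
      rw [hσ, ← AlgHom.comp_apply, comp_aeval]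
      congr 1
      congr 1
      funext i
      refine Fin.cases ?_ (fun i => ?_) i
      · simp
      · simp
    rw [h1, coeff_aeval_line]
    refine Finset.sum_eq_zero fun b hb => ?_
    by_cases hbs : b = Finsupp.single 0 N
    · rw [hbs, h0, zero_mul]
    · have hd : b.degree = N := (Finset.mem_filter.1 hb).2
      obtain ⟨i, hi⟩ : ∃ i : Fin e, b i.succ ≠ 0 := by
        by_contra! hcon
        apply hbs
        ext i
        refine Fin.cases ?_ (fun i => ?_) i
        · rw [Finsupp.degree_eq_sum, Fin.sum_univ_succ] at hd
          simp [hcon] at hd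
          simpa using hd
        · simp [hcon]
      rw [Finset.prod_eq_zero (Finset.mem_univ i.succ), mul_zero]
      simp [hi]
  -- monomials
  set mo : (Fin (e+1) →₀ ℕ) → MvPolynomial (Fin (e+1)) ℂ := fun b => ∏ i, w i ^ b i with hmo
  set gen : ℕ → Set (MvPolynomial (Fin (e+1)) ℂ) := fun k => mo '' {b | b 0 < N ∧ b.degree ≤ k} with hgen
  set G : ℕ → Submodule ℂ (MvPolynomial (Fin (e+1)) ℂ) := fun k =>
    Submodule.span ℂ (gen k) ⊔ (Ideal.span {F}).restrictScalars ℂ with hG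
  have hmoadd : ∀ i b, w i * mo b = mo (b + Finsupp.single i 1) := by
    intro i b
    simp only [hmo, Finsupp.add_apply, pow_add, Finset.prod_mul_distrib]
    rw [mul_comm]
    congr 1
    rw [Finset.prod_eq_single i]
    · simp
    · intro j _ hj; simp [Finsupp.single_apply, hj.symm]
    · simp
  have hmul : ∀ (p : MvPolynomial (Fin (e+1)) ℂ) k k', (∀ b : Fin (e+1) →₀ ℕ, b 0 < N → b.degree ≤ k → p * mo b ∈ G k') → ∀ f ∈ G k, p * f ∈ G k' := by
    intro p k k' h f hf
    obtain ⟨f1, h1, f2, h2, rfl⟩ := Submodule.mem_sup.1 hf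
    rw [mul_add]
    refine Submodule.add_mem _ ?_ (Submodule.mem_sup_right (Ideal.mul_mem_left _ _ h2))
    have : Submodule.span ℂ (gen k) ≤ (G k').comap (LinearMap.mulLeft ℂ p) := by
      rw [Submodule.span_le]
      rintro _ ⟨b, ⟨hb1, hb2⟩, rfl⟩
      exact h b hb1 hb2
    exact this h1
  have hgmem : ∀ k (b : Fin (e+1) →₀ ℕ), b 0 < N → b.degree ≤ k → mo b ∈ G k := fun k b h1 h2 =>
    Submodule.mem_sup_left (Submodule.subset_span ⟨b, ⟨h1, h2⟩, rfl⟩)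
  have ht1 : ∀ (i : Fin e) k, ∀ f ∈ G k, w i.succ * f ∈ G (k+1) := by
    intro i k
    refine hmul _ _ _ fun b h1 h2 => ?_
    rw [hmoadd]
    refine hgmem _ _ ?_ ?_
    · simpa [Finsupp.single_apply] using h1
    · simp; omega
  have hXN : w 0 ^ N ∈ G N := by
    have h1 : F = ∑ b ∈ (σ F).support, coeff b (σ F) • mo b := by
      conv_lhs => rw [← hσw F, aeval_def, eval₂_eq']
      refine Finset.sum_congr rfl fun b _ => ?_
      rw [Algebra.smul_def]
    have hs : Finsupp.single 0 N ∈ (σ F).support := mem_support_iff.2 hH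
    rw [← Finset.add_sum_erase _ _ hs] at h1
    have h2 : mo (Finsupp.single 0 N) = w 0 ^ N := by
      simp only [hmo]
      rw [Finset.prod_eq_single 0]
      · simp
      · intro j _ hj; simp [Finsupp.single_apply, hj.symm]
      · simp
    have h3 : coeff (Finsupp.single 0 N) (σ F) • w 0 ^ N ∈ G N := by
      rw [h2] at h1
      rw [← sub_eq_iff_eq_add] at h1
      rw [← h1]
      refine Submodule.sub_mem _ (Submodule.mem_sup_right (Ideal.mem_span_singleton_self F)) ?_
      refine Submodule.sum_mem _ fun b hb => Submodule.smul_mem _ _ ?_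
      obtain ⟨hb1, hb2⟩ := Finset.mem_erase.1 hb
      have hd : b.degree ≤ N := by
        have := (le_totalDegree hb2).trans (hσd F)
        rwa [Finsupp.sum_fintype _ _ (by simp), ← Finsupp.degree_eq_sum] at this
      refine hgmem _ _ ?_ hd
      by_contra hcon
      apply hb1
      rw [Finsupp.degree_eq_sum, Fin.sum_univ_succ] at hd
      have h0 : ∑ i : Fin e, b i.succ = 0 := by omega
      ext i
      refine Fin.cases ?_ (fun i => ?_) i
      · simp; omega
      · have := Finset.sum_eq_zero_iff.1 h0 i (Finset.mem_univ _)
        simpa using this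
    exact (Submodule.smul_mem_iff _ hH).1 h3
  have htm : ∀ (b : Fin (e+1) →₀ ℕ) , w 0 ^ N * ∏ i : Fin e, w i.succ ^ b i.succ ∈ G (N + ∑ i : Fin e, b i.succ) := by
    intro b
    have : ∀ s : Finset (Fin e), w 0 ^ N * ∏ i ∈ s, w i.succ ^ b i.succ ∈ G (N + ∑ i ∈ s, b i.succ) := by
      intro s
      induction s using Finset.induction_on with
      | empty => simpa using hXN
      | insert a s ha ih =>
        rw [Finset.prod_insert ha, Finset.sum_insert ha]
        have : ∀ r, w a.succ ^ r * (w 0 ^ N * ∏ i ∈ s, w i.succ ^ b i.succ) ∈ G ((N + ∑ i ∈ s, b i.succ) + r) := by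
          intro r
          induction r with
          | zero => simpa using ih
          | succ r ih2 => rw [pow_succ', mul_assoc]; exact ht1 _ _ _ ih2
        have h := this (b a.succ)
        rw [show N + (b a.succ + ∑ i ∈ s, b i.succ) = N + ∑ i ∈ s, b i.succ + b a.succ by ring]
        rwa [mul_left_comm]
    exact this Finset.univ
  have hmono : ∀ k k', k ≤ k' → G k ≤ G k' := by
    intro k k' h
    refine sup_le_sup_right (Submodule.span_mono (Set.image_mono ?_)) _
    exact fun b hb => ⟨hb.1, hb.2.trans h⟩
  have hX1 : ∀ k, ∀ f ∈ G k, w 0 * f ∈ G (k+1) := by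
    intro k
    refine hmul _ _ _ fun b h1 h2 => ?_
    by_cases hb : b 0 + 1 < N
    · rw [hmoadd]
      refine hgmem _ _ ?_ ?_
      · simpa using hb
      · simp; omega
    · have h3 : w 0 * mo b = w 0 ^ N * ∏ i : Fin e, w i.succ ^ b i.succ := by
        simp only [hmo]
        rw [Fin.prod_univ_succ, ← mul_assoc, ← pow_succ', show b 0 + 1 = N by omega]
      rw [h3]
      refine hmono _ _ ?_ (htm b)
      rw [Finsupp.degree_eq_sum, Fin.sum_univ_succ] at h2
      omega
  have h1G : (1 : MvPolynomial (Fin (e+1)) ℂ) ∈ G 0 := by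
    by_cases h0 : 0 < N
    · have := hgmem 0 0 (by simpa using h0) (by simp)
      simpa [hmo] using this
    · have h0 : N = 0 := by omega
      rw [h0] at hXN
      simpa using hXN
  have hmoG : ∀ b : Fin (e+1) →₀ ℕ, mo b ∈ G b.degree := by
    intro b
    have hwi : ∀ i k, ∀ f ∈ G k, w i * f ∈ G (k+1) := fun i =>
      Fin.cases (motive := fun i => ∀ k, ∀ f ∈ G k, w i * f ∈ G (k+1)) hX1 ht1 i
    have : ∀ s : Finset (Fin (e+1)), ∏ i ∈ s, w i ^ b i ∈ G (∑ i ∈ s, b i) := by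
      intro s
      induction s using Finset.induction_on with
      | empty => simpa using h1G
      | insert a s ha ih =>
        rw [Finset.prod_insert ha, Finset.sum_insert ha]
        have : ∀ r, w a ^ r * (∏ i ∈ s, w i ^ b i) ∈ G ((∑ i ∈ s, b i) + r) := by
          intro r
          induction r with
          | zero => simpa using ih
          | succ r ih2 => rw [pow_succ', mul_assoc]; exact hwi _ _ _ ih2
        rw [add_comm (b a)]
        exact this _
    rw [Finsupp.degree_eq_sum]
    exact this Finset.univ
  have hfG : ∀ k f, f.totalDegree ≤ k → f ∈ G k := by
    intro k f hf
    rw [← hσw f, aeval_def, eval₂_eq']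
    refine Submodule.sum_mem _ fun b hb => ?_
    rw [← Algebra.smul_def]
    refine Submodule.smul_mem _ _ (hmono _ _ ?_ (hmoG b))
    have := ((le_totalDegree hb).trans (hσd f)).trans hf
    rwa [Finsupp.sum_fintype _ _ (by simp), ← Finsupp.degree_eq_sum] at this
  refine ⟨N, fun s => w 0 ^ (s : ℕ), fun k f hf => ?_⟩
  obtain ⟨f1, h1, f2, h2, rfl⟩ := Submodule.mem_sup.1 (hfG k f hf)
  have key : ∃ Φ : Fin N → MvPolynomial (Fin e) ℂ, (∀ s, (Φ s).totalDegree ≤ k) ∧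
      f1 = ∑ s : Fin N, w 0 ^ (s : ℕ) * aeval t (Φ s) := by
    clear hf h2
    induction h1 using Submodule.span_induction with
    | mem x hx =>
      obtain ⟨b, ⟨hb1, hb2⟩, rfl⟩ := hx
      refine ⟨fun s => if s = ⟨b 0, hb1⟩ then ∏ i : Fin e, X i ^ b i.succ else 0, fun s => ?_, ?_⟩
      · beta_reduce; split_ifs
        · refine (totalDegree_finsetProd _ _).trans ?_
          rw [Finsupp.degree_eq_sum, Fin.sum_univ_succ] at hb2
          refine le_trans (Finset.sum_le_sum (g := fun i => b i.succ) fun i _ => ?_) (by omega : ∑ i : Fin e, b i.succ ≤ k)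
          simp
        · simp
      · rw [Finset.sum_eq_single ⟨b 0, hb1⟩]
        · simp [hmo, Fin.prod_univ_succ, hw]
        · intro s _ hs; simp [hs]
        · simp
    | zero => exact ⟨0, by simp, by simp⟩
    | add x y _ _ hx hy =>
      obtain ⟨Φ, a1, a2⟩ := hx
      obtain ⟨Ψ, b1, b2⟩ := hy
      refine ⟨fun s => Φ s + Ψ s, fun s => (totalDegree_add _ _).trans (max_le (a1 s) (b1 s)), ?_⟩
      simp [a2, b2, mul_add, Finset.sum_add_distrib]
    | smul a x _ hx =>
      obtain ⟨Φ, a1, a2⟩ := hx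
      refine ⟨fun s => a • Φ s, fun s => (totalDegree_smul_le _ _).trans (a1 s), ?_⟩
      simp [a2, Finset.smul_sum]
  obtain ⟨Φ, a1, a2⟩ := key
  refine ⟨Φ, a1, ?_⟩
  rw [← a2]
  simpa using h2

lemma exists_normalization {n : ℕ} (I : Ideal (MvPolynomial (Fin n) ℂ)) (hI : I ≠ ⊤) :
    ∃ (e : ℕ) (y : Fin e → MvPolynomial (Fin n) ℂ), (∀ i, (y i).totalDegree ≤ 1) ∧ DegFin I y ∧
      ∀ F : MvPolynomial (Fin e) ℂ, aeval y F ∈ I → F = 0 := by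
  have : ∀ (e : ℕ) (y : Fin e → MvPolynomial (Fin n) ℂ), (∀ i, (y i).totalDegree ≤ 1) → DegFin I y →
     ∃ (e : ℕ) (y : Fin e → MvPolynomial (Fin n) ℂ), (∀ i, (y i).totalDegree ≤ 1) ∧ DegFin I y ∧
      ∀ F : MvPolynomial (Fin e) ℂ, aeval y F ∈ I → F = 0 := by
    intro e
    induction e with
    | zero =>
      intro y h1 h2
      refine ⟨0, y, h1, h2, fun F hF => ?_⟩
      by_contra h
      rw [eq_C_of_isEmpty F, aeval_C] at hF
      refine hI (Ideal.eq_top_of_isUnit_mem _ hF ?_)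
      refine IsUnit.map _ (isUnit_iff_ne_zero.2 fun h0 => h ?_)
      rw [eq_C_of_isEmpty F, h0, C_0]
    | succ e ih =>
      intro y h1 h2
      by_cases h : ∀ F : MvPolynomial (Fin (e+1)) ℂ, aeval y F ∈ I → F = 0
      · exact ⟨_, y, h1, h2, h⟩
      · push Not at h
        obtain ⟨F, hF, hF0⟩ := h
        obtain ⟨c, hc⟩ := degFin_step F hF0
        refine ih _ ?_ (h2.trans hc ?_)
        · intro i
          simp only [map_sub, map_mul, aeval_X, aeval_C]
          refine (totalDegree_sub _ _).trans (max_le (h1 _) ((totalDegree_mul _ _).trans ?_))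
          have : (algebraMap ℂ (MvPolynomial (Fin n) ℂ) (c i)).totalDegree = 0 := totalDegree_C _
          have := h1 0
          omega
        · rw [Ideal.span_le]; simpa using hF
  exact this n X (fun i => by simp) (degFin_X I)
end NN
end Paper

namespace Paper
section Dim
set_option linter.unusedSimpArgs false

lemma height_max_mvPoly (e : ℕ) (M : Ideal (MvPolynomial (Fin e) ℂ)) (hM : M.IsMaximal) : M.height = e := by
  induction e with
  | zero =>
    have : M = ⊥ := by
      have := (isEmptyAlgEquiv ℂ (Fin 0)).toRingEquiv.toRingHom
      have hF : IsField (MvPolynomial (Fin 0) ℂ) := MulEquiv.isField (Field.toIsField ℂ) (isEmptyAlgEquiv ℂ (Fin 0)).toMulEquiv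
      let _ := hF.toField
      exact (Ideal.eq_bot_or_top M).resolve_right hM.ne_top
    subst this
    simp
  | succ e ih =>
    let φ := (finSuccEquiv ℂ e).toRingEquiv
    let P : Ideal (Polynomial (MvPolynomial (Fin e) ℂ)) := M.comap φ.symm
    have hP : P.IsMaximal := Ideal.comap_isMaximal_of_equiv φ.symm (p := M)
    have h1 : P.height = M.height := RingEquiv.height_comap φ.symm M
    have := Ideal.over_under (A := MvPolynomial (Fin e) ℂ) (P := P)
    have h2 := Polynomial.height_eq_height_add_one (P.under (MvPolynomial (Fin e) ℂ)) P
    have h3 : (P.under (MvPolynomial (Fin e) ℂ)).IsMaximal := Polynomial.isMaximal_comap_C_of_isJacobsonRing P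
    rw [← h1, h2, ih _ h3]
    simp

lemma dim_le_of_integral {R S : Type*} [CommRing R] [CommRing S] (f : R →+* S) (hf : f.IsIntegral) :
    ringKrullDim S ≤ ringKrullDim R := by
  let _ : Algebra R S := f.toAlgebra
  have : Algebra.IsIntegral R S := ⟨hf⟩
  refine Order.krullDim_le_of_strictMono (PrimeSpectrum.comap f) ?_
  intro p q hpq
  exact Ideal.IsIntegral.comap_lt_comap (R := R) (I := p.asIdeal) (J := q.asIdeal) hpq

lemma ringKrullDim_mvPoly (e : ℕ) : ringKrullDim (MvPolynomial (Fin e) ℂ) = e := by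
  rw [MvPolynomial.ringKrullDim_of_isNoetherianRing]; simp

variable {e : ℕ} {A : Type*} [CommRing A] [IsDomain A] [Algebra (MvPolynomial (Fin e) ℂ) A]
  [Algebra.IsIntegral (MvPolynomial (Fin e) ℂ) A]

lemma height_max_of_inj [IsNoetherianRing A] [FaithfulSMul (MvPolynomial (Fin e) ℂ) A] (M : Ideal A) (hM : M.IsMaximal) :
    (e : ℕ∞) ≤ M.height := by
  have h1 : (M.under (MvPolynomial (Fin e) ℂ)).IsMaximal := Ideal.isMaximal_comap_of_isIntegral_of_isMaximal M
  rw [← height_max_mvPoly e _ h1]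
  have := Ideal.over_under (A := MvPolynomial (Fin e) ℂ) (P := M)
  rw [Ideal.height_eq_height_add_of_liesOver_of_hasGoingDown (M.under (MvPolynomial (Fin e) ℂ)) M]
  exact le_self_add

lemma dim_of_inj [IsNoetherianRing A] [FaithfulSMul (MvPolynomial (Fin e) ℂ) A]  :
    ringKrullDim A = e := by
  refine le_antisymm ?_ ?_
  · rw [← ringKrullDim_mvPoly e]
    exact dim_le_of_integral (algebraMap (MvPolynomial (Fin e) ℂ) A) (fun x => Algebra.IsIntegral.isIntegral x)
  · obtain ⟨M, hM⟩ := Ideal.exists_maximal A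
    have := height_max_of_inj (e := e) M hM
    refine le_trans ?_ (Ideal.height_le_ringKrullDim_of_isPrime (I := M))
    exact_mod_cast this

lemma dim_of_not_inj (h : ∃ F : MvPolynomial (Fin e) ℂ, F ≠ 0 ∧ algebraMap _ A F = 0) :
    ringKrullDim A + 1 ≤ e := by
  obtain ⟨F, hF, h0⟩ := h
  rw [← ringKrullDim_mvPoly e]
  refine le_trans ?_ (ringKrullDim_quotient_succ_le_of_nonZeroDivisor (mem_nonZeroDivisors_of_ne_zero hF))
  gcongr
  let g : (MvPolynomial (Fin e) ℂ) ⧸ Ideal.span {F} →+* A := Ideal.Quotient.lift _ (algebraMap _ A) (by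
    intro a ha
    obtain ⟨b, rfl⟩ := Ideal.mem_span_singleton.1 ha
    simp [h0])
  refine dim_le_of_integral g ?_
  refine RingHom.IsIntegral.tower_top (Ideal.Quotient.mk _) g ?_
  intro x
  exact Algebra.IsIntegral.isIntegral (R := MvPolynomial (Fin e) ℂ) x
end Dim
end Paper

namespace Paper
section Count
set_option linter.unusedSimpArgs false

/-- coefficients in a box -/
noncomputable def boxCoeff (d k : ℕ) : restrictTotalDegree (Fin d) ℂ k →ₗ[ℂ] ((Fin d → Fin (k+1)) → ℂ) where
  toFun f a := coeff (Finsupp.equivFunOnFinite.symm fun i => (a i : ℕ)) f.1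
  map_add' f g := by ext a; simp
  map_smul' c f := by ext a; simp

lemma boxCoeff_inj (d k : ℕ) : Function.Injective (boxCoeff d k) := by
  rw [injective_iff_map_eq_zero]
  intro f hf
  ext b
  by_contra hb
  have hb' : b ∈ f.1.support := mem_support_iff.2 hb
  have hd := (le_totalDegree hb').trans ((mem_restrictTotalDegree _ _ _).1 f.2)
  rw [Finsupp.sum_fintype _ _ (by simp)] at hd
  have hi : ∀ i, b i < k + 1 := fun i => by
    have := Finset.single_le_sum (f := fun i => b i) (fun _ _ => Nat.zero_le _) (Finset.mem_univ i)
    omega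
  have := congrFun hf (fun i => ⟨b i, hi i⟩)
  apply hb
  simp only [boxCoeff, LinearMap.coe_mk, AddHom.coe_mk, Pi.zero_apply] at this
  convert this using 1
  · congr 1; ext i; simp
  · simp

instance (d k : ℕ) : Module.Finite ℂ (restrictTotalDegree (Fin d) ℂ k) :=
  Module.Finite.of_injective _ (boxCoeff_inj d k)

lemma finrank_box (d k : ℕ) : Module.finrank ℂ (restrictTotalDegree (Fin d) ℂ k) ≤ (k+1)^d := by
  have := LinearMap.finrank_le_finrank_of_injective (boxCoeff_inj d k)
  simpa using this

lemma finrank_box_pos (d k : ℕ) : 1 ≤ Module.finrank ℂ (restrictTotalDegree (Fin d) ℂ k) := by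
  have : Nontrivial (restrictTotalDegree (Fin d) ℂ k) :=
    ⟨⟨0, ⟨⟨1, (mem_restrictTotalDegree _ _ _).2 (by simp)⟩, by
      intro h; exact zero_ne_one (congrArg Subtype.val h)⟩⟩⟩
  exact Module.finrank_pos

lemma growth (N : ℕ → ℕ) (d m e c : ℕ) (h0 : 1 ≤ N 0) (hN : ∀ k, N k ≤ (k+1)^d)
    (h : ∀ k, m * N k ≤ e * N (k + c)) : m ≤ e := by
  by_contra! hme
  have h1 : ∀ j, (e+1)^j ≤ e^j * N (j*c) := by
    intro j
    induction j with
    | zero => simpa using h0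
    | succ j ih =>
      calc (e+1)^(j+1) = (e+1) * (e+1)^j := by ring
        _ ≤ m * (e^j * N (j*c)) := Nat.mul_le_mul hme ih
        _ = e^j * (m * N (j*c)) := by ring
        _ ≤ e^j * (e * N (j*c+c)) := Nat.mul_le_mul_left _ (h _)
        _ = e^(j+1) * N ((j+1)*c) := by rw [show (j+1)*c = j*c+c by ring]; ring
  set r : ℝ := (e:ℝ)/(e+1) with hr
  have hr1 : |r| < 1 := by
    rw [abs_of_nonneg (by positivity), hr, div_lt_one (by positivity)]; linarith
  have ht := (tendsto_pow_const_mul_const_pow_of_abs_lt_one d hr1).const_mul (((c:ℝ)+1)^d)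
  rw [mul_zero] at ht
  have h2 : ∀ᶠ j : ℕ in Filter.atTop, (1:ℝ) ≤ ((c:ℝ)+1)^d * ((j:ℝ)^d * r^j) := by
    filter_upwards [Filter.eventually_ge_atTop 1] with j hj
    have h3 := (h1 j).trans (Nat.mul_le_mul_left _ (hN (j*c)))
    have h4 : (j*c+1)^d ≤ ((c+1)*j)^d := Nat.pow_le_pow_left (by nlinarith) d
    have h5 : (e+1)^j ≤ e^j * ((c+1)*j)^d := h3.trans (Nat.mul_le_mul_left _ h4)
    have h6 : ((e:ℝ)+1)^j ≤ e^j * ((c+1)*j)^d := by exact_mod_cast h5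
    rw [hr, div_pow, ← mul_assoc, ← mul_pow, mul_div_assoc', le_div_iff₀ (by positivity), one_mul]
    linarith
  have := ge_of_tendsto ht h2
  linarith

lemma exists_order {m : ℕ} (ψ : Fin m → Polynomial ℂ) (j1 : Fin m) (h : ψ j1 ≠ 0) :
    ∃ (k : ℕ) (χ : Fin m → Polynomial ℂ) (j0 : Fin m), (∀ j, ψ j = Polynomial.X ^ k * χ j) ∧ (χ j0).eval 0 ≠ 0 := by
  classical
  have hex : ∃ k, ∃ j, (ψ j).coeff k ≠ 0 := by
    by_contra! hcon
    exact h (Polynomial.ext fun k => by simp [hcon k j1])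
  obtain ⟨j0, hj0⟩ := Nat.find_spec hex
  have hdvd : ∀ j, Polynomial.X ^ (Nat.find hex) ∣ ψ j := by
    intro j
    rw [Polynomial.X_pow_dvd_iff]
    intro d hd
    have := Nat.find_min hex hd
    push Not at this
    exact this j
  choose χ hχ using hdvd
  refine ⟨_, χ, j0, hχ, ?_⟩
  rw [hχ j0] at hj0
  have := Polynomial.coeff_X_pow_mul (χ j0) (Nat.find hex) 0
  rw [zero_add] at this
  rwa [this, Polynomial.coeff_zero_eq_eval_zero] at hj0

lemma indep_lower {A : Type*} [CommRing A] [IsNoetherianRing A] [Algebra ℂ A] {m d : ℕ} 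
    (p : Fin m → A →ₐ[ℂ] ℂ) (ℓ : Fin d → A) (hℓ : ∀ j i, p j (ℓ i) = 0)
    (hmin : ∀ j (Q : Ideal A), Q.IsPrime → (∀ i, ℓ i ∈ Q) → Q ≤ RingHom.ker (p j) → RingHom.ker (p j) ≤ Q)
    (hht : ∀ j, (d : ℕ∞) ≤ (RingHom.ker (p j)).height) (hd : 1 ≤ d)
    (q : Fin m → A) (hq : ∀ i j, p i (q j) = if i = j then 1 else 0)
    (Φ : Fin m → MvPolynomial (Fin d) ℂ) (hΦ : ∑ j, q j * aeval ℓ (Φ j) = 0) : ∀ j, Φ j = 0 := by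
  classical
  obtain ⟨d, rfl⟩ : ∃ d', d = d' + 1 := ⟨d - 1, by omega⟩
  intro j1
  by_contra hj1
  obtain ⟨v, hv⟩ : ∃ v, eval v (Φ j1 * X 0) ≠ 0 := by
    by_contra! h
    exact mul_ne_zero hj1 (X_ne_zero 0) (MvPolynomial.funext (by simpa using h))
  simp only [eval_mul, eval_X] at hv
  have hv0 : v 0 ≠ 0 := right_ne_zero_of_mul hv
  have hv1 := left_ne_zero_of_mul hv
  set c : Fin (d+1) → ℂ := fun i => v i / v 0 with hc
  set ψ : Fin m → Polynomial ℂ := fun j => aeval (fun i => Polynomial.C (c i) * Polynomial.X) (Φ j) with hψ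
  have hψ1 : ψ j1 ≠ 0 := by
    intro h
    apply hv1
    have := congrArg (Polynomial.aeval (v 0)) h
    rw [map_zero, hψ] at this
    simp only at this
    rw [← AlgHom.comp_apply, comp_aeval] at this
    have e2 : (fun i => (Polynomial.aeval (v 0)) (Polynomial.C (c i) * Polynomial.X)) = v := by
      funext i
      simp [hc]
      field_simp
    rw [e2] at this
    rw [← this]
    exact (DFunLike.congr_fun (coe_aeval_eq_eval v) _).symm
  obtain ⟨k, χ, j0, h1, h2⟩ := exists_order ψ j1 hψ1
  set 𝔞 : Ideal A := Ideal.span (((Finset.univ : Finset (Fin d)).image (fun i => ℓ i.succ - c i.succ • ℓ 0) : Finset A) : Set A) with ha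
  have hmem : ∀ i, ℓ i - c i • ℓ 0 ∈ 𝔞 := by
    intro i
    refine Fin.cases ?_ (fun i => ?_) i
    · simp [hc, hv0]
    · exact Ideal.subset_span (by simp)
  set s : A := ∑ j, q j * Polynomial.aeval (ℓ 0) (χ j) with hs
  have hcong : ∀ j, aeval ℓ (Φ j) - Polynomial.aeval (ℓ 0) (ψ j) ∈ 𝔞 := by
    intro j
    rw [← Ideal.Quotient.eq]
    have e1 : Polynomial.aeval (ℓ 0) (ψ j) = aeval (fun i => c i • ℓ 0) (Φ j) := by
      rw [hψ]
      simp only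
      rw [← AlgHom.comp_apply, comp_aeval]
      congr 2
      funext i
      simp [Algebra.smul_def]
    rw [e1]
    change (Ideal.Quotient.mkₐ ℂ 𝔞) _ = (Ideal.Quotient.mkₐ ℂ 𝔞) _
    rw [← AlgHom.comp_apply, comp_aeval, ← AlgHom.comp_apply, comp_aeval]
    congr 2
    funext i
    exact Ideal.Quotient.eq.2 (hmem i)
  have hsmem : ℓ 0 ^ k * s ∈ 𝔞 := by
    have h3 : ℓ 0 ^ k * s = ∑ j, q j * Polynomial.aeval (ℓ 0) (ψ j) := by
      rw [hs, Finset.mul_sum]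
      refine Finset.sum_congr rfl fun j _ => ?_
      rw [h1 j]; simp; ring
    have h4 : ∑ j, q j * (aeval ℓ (Φ j) - Polynomial.aeval (ℓ 0) (ψ j)) ∈ 𝔞 :=
      Ideal.sum_mem _ fun j _ => Ideal.mul_mem_left _ _ (hcong j)
    simp only [mul_sub, Finset.sum_sub_distrib, hΦ, ← h3, zero_sub] at h4
    exact neg_mem_iff.1 h4
  have hps : p j0 s ≠ 0 := by
    have : p j0 s = (χ j0).eval 0 := by
      rw [hs, map_sum, Finset.sum_eq_single j0]
      · rw [map_mul, hq, if_pos rfl, one_mul, ← Polynomial.aeval_algHom_apply, hℓ]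
        simp [Polynomial.aeval_def, Polynomial.eval₂_eq_eval_map]
      · intro j _ hj
        rw [map_mul, hq, if_neg hj.symm, zero_mul]
      · simp
    rwa [this]
  have hM : RingHom.ker (p j0) ∈ 𝔞.minimalPrimes := by
    refine ⟨⟨RingHom.ker_isPrime _, ?_⟩, ?_⟩
    · rw [ha, Ideal.span_le]
      intro x hx
      simp only [Finset.coe_image, Finset.coe_univ, Set.image_univ, Set.mem_range] at hx
      obtain ⟨i, rfl⟩ := hx
      simp [RingHom.mem_ker, hℓ]
    · rintro Q ⟨hQ, haQ⟩ hQM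
      refine hmin j0 Q hQ ?_ hQM
      have h0 : ℓ 0 ∈ Q := by
        rcases hQ.mem_or_mem (haQ hsmem) with h | h
        · exact hQ.mem_of_pow_mem _ h
        · exact absurd (hQM h) (by simpa [RingHom.mem_ker] using hps)
      intro i
      have h5 := Ideal.add_mem _ (haQ (hmem i)) (Ideal.mul_mem_left Q (algebraMap ℂ A (c i)) h0)
      rwa [← Algebra.smul_def, sub_add_cancel] at h5
  have hle := Ideal.height_le_card_of_mem_minimalPrimes_span_finset hM
  have hcard : (((Finset.univ : Finset (Fin d)).image (fun i => ℓ i.succ - c i.succ • ℓ 0)).card : ℕ∞) ≤ d := by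
    exact_mod_cast Finset.card_image_le.trans (by simp)
  have := (hht j0).trans (hle.trans hcard)
  have : d + 1 ≤ d := by exact_mod_cast this
  omega

end Count
end Paper

namespace Paper
section Upper
set_option linter.unusedSimpArgs false
set_option linter.unusedSectionVars false

variable {n d : ℕ} {A : Type*} [CommRing A] [Algebra ℂ A] [Algebra (MvPolynomial (Fin d) ℂ) A]
  [IsScalarTower ℂ (MvPolynomial (Fin d) ℂ) A]
  (π : MvPolynomial (Fin n) ℂ →ₐ[ℂ] A) (hπ : Function.Surjective π)
  (y : Fin d → MvPolynomial (Fin n) ℂ) (hy : ∀ F, π (aeval y F) = algebraMap (MvPolynomial (Fin d) ℂ) A F)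
  (hfin : DegFin (RingHom.ker π) y)

include hπ hy hfin in
lemma finite_of_degFin : Module.Finite (MvPolynomial (Fin d) ℂ) A := by
  classical
  obtain ⟨N, u, hu⟩ := hfin
  refine ⟨⟨Finset.univ.image (fun s => π (u s)), ?_⟩⟩
  rw [eq_top_iff]
  intro a _
  obtain ⟨f, rfl⟩ := hπ a
  obtain ⟨Φ, -, h⟩ := hu _ f le_rfl
  rw [RingHom.mem_ker, map_sub, sub_eq_zero] at h
  rw [h, map_sum]
  refine Submodule.sum_mem _ fun s _ => ?_
  rw [map_mul, hy, mul_comm, ← Algebra.smul_def]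
  exact Submodule.smul_mem _ _ (Submodule.subset_span (by simp))

lemma exists_max_indep [IsDomain A] [Module.Finite (MvPolynomial (Fin d) ℂ) A]
    [FaithfulSMul (MvPolynomial (Fin d) ℂ) A] :
    ∃ β : Fin (Module.finrank (MvPolynomial (Fin d) ℂ) A) → A, LinearIndependent (MvPolynomial (Fin d) ℂ) β ∧
      ∀ u : A, ∃ Δ : MvPolynomial (Fin d) ℂ, Δ ≠ 0 ∧ ∃ a : Fin (Module.finrank (MvPolynomial (Fin d) ℂ) A) → MvPolynomial (Fin d) ℂ,
        Δ • u = ∑ i, a i • β i := by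
  obtain ⟨β, hβ⟩ := exists_linearIndependent_of_le_finrank (R := MvPolynomial (Fin d) ℂ) (M := A) le_rfl
  refine ⟨β, hβ, fun u => ?_⟩
  by_contra! hcon
  have := LinearIndependent.finCons' u β hβ (by
    intro c y hy hc
    by_contra h0
    obtain ⟨a, ha⟩ := (Submodule.mem_span_range_iff_exists_fun _).1 hy
    refine hcon c h0 (-a) ?_
    simp only [Pi.neg_apply, neg_smul, Finset.sum_neg_distrib, ha]
    exact eq_neg_of_add_eq_zero_left hc)
  have h := this.fintype_card_le_finrank
  simp at h

include hy hfin in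
lemma upper [IsDomain A] [Module.Finite (MvPolynomial (Fin d) ℂ) A]
    [FaithfulSMul (MvPolynomial (Fin d) ℂ) A] :
    ∃ β : Fin (Module.finrank (MvPolynomial (Fin d) ℂ) A) → A, LinearIndependent (MvPolynomial (Fin d) ℂ) β ∧
      ∃ Δ : MvPolynomial (Fin d) ℂ, Δ ≠ 0 ∧ ∃ c : ℕ, ∀ k f, f.totalDegree ≤ k → 
      ∃ Ψ : Fin (Module.finrank (MvPolynomial (Fin d) ℂ) A) → MvPolynomial (Fin d) ℂ,
        (∀ i, (Ψ i).totalDegree ≤ k + c) ∧ Δ • π f = ∑ i, Ψ i • β i := by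
  classical
  obtain ⟨β, hβ, h⟩ := exists_max_indep (d := d) (A := A)
  refine ⟨β, hβ, ?_⟩
  obtain ⟨N, u, hu⟩ := hfin
  choose D hD a ha using fun s => h (π (u s))
  refine ⟨∏ s, D s, Finset.prod_ne_zero_iff.2 fun s _ => hD s,
    ∑ s, ∑ i, ((∏ r ∈ Finset.univ.erase s, D r) * a s i).totalDegree, fun k f hf => ?_⟩
  obtain ⟨Φ, hΦ, hf2⟩ := hu k f hf
  rw [RingHom.mem_ker, map_sub, sub_eq_zero] at hf2
  refine ⟨fun i => ∑ s, Φ s * ((∏ r ∈ Finset.univ.erase s, D r) * a s i), fun i => ?_, ?_⟩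
  · refine totalDegree_finsetSum_le fun s _ => (totalDegree_mul _ _).trans (add_le_add (hΦ s) ?_)
    refine le_trans ?_ (Finset.single_le_sum (f := fun s => ∑ i, ((∏ r ∈ Finset.univ.erase s, D r) * a s i).totalDegree) (fun _ _ => Nat.zero_le _) (Finset.mem_univ s))
    exact (Finset.single_le_sum (f := fun i => ((∏ r ∈ Finset.univ.erase s, D r) * a s i).totalDegree) (fun _ _ => Nat.zero_le _) (Finset.mem_univ i))
  · rw [hf2, map_sum, Finset.smul_sum]
    simp only [Finset.sum_smul]
    rw [Finset.sum_comm]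
    refine Finset.sum_congr rfl fun s _ => ?_
    rw [map_mul, hy, ← Finset.mul_prod_erase _ _ (Finset.mem_univ s)]
    have : (D s * ∏ r ∈ Finset.univ.erase s, D r) • (π (u s) * algebraMap (MvPolynomial (Fin d) ℂ) A (Φ s))
       = (Φ s * ∏ r ∈ Finset.univ.erase s, D r) • (D s • π (u s)) := by
      simp only [Algebra.smul_def, map_mul]; ring
    rw [this, ha, Finset.smul_sum]
    refine Finset.sum_congr rfl fun i _ => ?_
    rw [smul_smul, mul_assoc]

include hy hfin in
lemma card_le_rank [IsDomain A] [Module.Finite (MvPolynomial (Fin d) ℂ) A]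
    [FaithfulSMul (MvPolynomial (Fin d) ℂ) A] {m : ℕ} (q : Fin m → MvPolynomial (Fin n) ℂ)
    (ℓ : Fin d → MvPolynomial (Fin n) ℂ) (hℓ : ∀ i, (ℓ i).totalDegree ≤ 1)
    (hind : ∀ Φ : Fin m → MvPolynomial (Fin d) ℂ, ∑ j, π (q j) * π (aeval ℓ (Φ j)) = 0 → ∀ j, Φ j = 0) :
    m ≤ Module.finrank (MvPolynomial (Fin d) ℂ) A := by
  obtain ⟨β, hβ, Δ, hΔ, c, hup⟩ := upper π y hy hfin
  generalize Module.finrank (MvPolynomial (Fin d) ℂ) A = e at *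
  set c' := ∑ j, (q j).totalDegree
  refine growth (fun k => Module.finrank ℂ (restrictTotalDegree (Fin d) ℂ k)) d m e (c' + c) (finrank_box_pos d 0) (finrank_box d) ?_
  intro k
  -- the target map
  let Θ : (Fin e → restrictTotalDegree (Fin d) ℂ (k + (c' + c))) →ₗ[ℂ] A :=
    { toFun := fun Ψ => ∑ i, (Ψ i).1 • β i
      map_add' := fun f g => by simp [add_smul, Finset.sum_add_distrib]
      map_smul' := fun a f => by simp [Finset.smul_sum] }
  let Λ : (Fin m → restrictTotalDegree (Fin d) ℂ k) →ₗ[ℂ] A :=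
    { toFun := fun Φ => Δ • ∑ j, π (q j) * π (aeval ℓ (Φ j).1)
      map_add' := fun f g => by simp [mul_add, Finset.sum_add_distrib, smul_add]
      map_smul' := fun a f => by
        simp only [Pi.smul_apply, SetLike.val_smul, map_smul, mul_smul_comm, ← Finset.smul_sum, RingHom.id_apply]
        rw [smul_comm] }
  have hΛinj : Function.Injective Λ := by
    rw [injective_iff_map_eq_zero]
    intro Φ h
    have h1 : Δ • ∑ j, π (q j) * π (aeval ℓ (Φ j).1) = 0 := h
    rw [Algebra.smul_def] at h1
    rcases mul_eq_zero.1 h1 with h2 | h2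
    · exact absurd ((FaithfulSMul.algebraMap_injective (MvPolynomial (Fin d) ℂ) A) (h2.trans (map_zero _).symm)) hΔ
    · have := hind _ h2
      funext j
      exact Subtype.ext (this j)
  have hdeg : ∀ F : MvPolynomial (Fin d) ℂ, (aeval ℓ F).totalDegree ≤ F.totalDegree := by
    intro F
    rw [aeval_def, eval₂_eq']
    refine totalDegree_finsetSum_le fun b hb => ?_
    refine (totalDegree_mul _ _).trans ?_
    have h1 : (algebraMap ℂ (MvPolynomial (Fin n) ℂ) (coeff b F)).totalDegree = 0 := totalDegree_C _
    rw [h1, zero_add]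
    refine (totalDegree_finsetProd _ _).trans ?_
    refine le_trans ?_ (le_totalDegree hb)
    rw [Finsupp.sum_fintype _ _ (by simp)]
    refine Finset.sum_le_sum fun i _ => ?_
    refine (totalDegree_pow _ _).trans ?_
    have := hℓ i
    nlinarith
  have hrange : ∀ Φ, Λ Φ ∈ LinearMap.range Θ := by
    intro Φ
    have hd : (∑ j, q j * aeval ℓ (Φ j).1).totalDegree ≤ k + c' := by
      refine totalDegree_finsetSum_le fun j _ => (totalDegree_mul _ _).trans ?_
      have h1 := (hdeg (Φ j).1).trans ((mem_restrictTotalDegree _ _ _).1 (Φ j).2)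
      have h2 : (q j).totalDegree ≤ c' := Finset.single_le_sum (f := fun j => (q j).totalDegree) (fun _ _ => Nat.zero_le _) (Finset.mem_univ j)
      omega
    obtain ⟨Ψ, h1, h2⟩ := hup _ _ hd
    refine ⟨fun i => ⟨Ψ i, (mem_restrictTotalDegree _ _ _).2 ((h1 i).trans (by omega))⟩, ?_⟩
    change ∑ i, Ψ i • β i = Δ • ∑ j, π (q j) * π (aeval ℓ (Φ j).1)
    rw [← h2]
    simp
  have h1 := LinearMap.finrank_le_finrank_of_injective (f := Λ.codRestrict (LinearMap.range Θ) hrange)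
    (fun a b h => hΛinj (congrArg Subtype.val h))
  have h2 := h1.trans (LinearMap.finrank_range_le Θ)
  simpa [Module.finrank_pi_fintype] using h2
end Upper
end Paper

namespace Paper
section Pts
set_option linter.unusedSimpArgs false
set_option linter.unusedSectionVars false

lemma exists_interp {n m : ℕ} (p : Fin m → Fin n → ℂ) (hp : Function.Injective p) :
    ∃ q : Fin m → MvPolynomial (Fin n) ℂ, ∀ i j, eval (p i) (q j) = if i = j then 1 else 0 := by
  classical
  have h : ∀ i j, i ≠ j → ∃ t, p i t ≠ p j t := fun i j hij => by
    by_contra! hc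
    exact hij (hp (funext hc))
  have : ∀ j i, ∃ f : MvPolynomial (Fin n) ℂ, eval (p j) f = 1 ∧ (i ≠ j → eval (p i) f = 0) := by
    intro j i
    by_cases hij : i = j
    · exact ⟨1, by simp, fun h => absurd hij h⟩
    · obtain ⟨t, ht⟩ := h i j hij
      refine ⟨C (p j t - p i t)⁻¹ * (X t - C (p i t)), ?_, ?_⟩
      · have : p j t - p i t ≠ 0 := sub_ne_zero.2 (Ne.symm ht)
        simp [this]
      · simp
  choose f hf1 hf2 using this
  refine ⟨fun j => ∏ i, f j i, fun i j => ?_⟩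
  rw [map_prod]
  split_ifs with hij
  · subst hij
    simp [hf1]
  · exact Finset.prod_eq_zero (Finset.mem_univ i) (hf2 j i hij)

variable {n d : ℕ} {A : Type*} [CommRing A] [Algebra ℂ A] [Algebra (MvPolynomial (Fin d) ℂ) A]
  [IsScalarTower ℂ (MvPolynomial (Fin d) ℂ) A]
  (π : MvPolynomial (Fin n) ℂ →ₐ[ℂ] A) (hπ : Function.Surjective π)
  (y : Fin d → MvPolynomial (Fin n) ℂ) (hy : ∀ F, π (aeval y F) = algebraMap (MvPolynomial (Fin d) ℂ) A F)
  (hfin : DegFin (RingHom.ker π) y)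

lemma eval_eq_aeval {n : ℕ} (p : Fin n → ℂ) (f : MvPolynomial (Fin n) ℂ) : aeval p f = eval p f :=
  DFunLike.congr_fun (coe_aeval_eq_eval p) f

include hπ in
lemma exists_lift_eval (p : Fin n → ℂ) (hp : ∀ f ∈ RingHom.ker π, eval p f = 0) :
    ∃ φ : A →ₐ[ℂ] ℂ, ∀ f, φ (π f) = eval p f := by
  let φ0 : (MvPolynomial (Fin n) ℂ ⧸ RingHom.ker π) →ₐ[ℂ] ℂ := Ideal.Quotient.liftₐ (RingHom.ker π) (aeval p) (fun f hf => by
    rw [eval_eq_aeval]; exact hp f hf)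
  refine ⟨φ0.comp (Ideal.quotientKerAlgEquivOfSurjective hπ).symm.toAlgHom, fun f => ?_⟩
  have : (Ideal.quotientKerAlgEquivOfSurjective hπ).symm (π f) = Ideal.Quotient.mk _ f := by
    rw [AlgEquiv.symm_apply_eq]; rfl
  rw [AlgHom.comp_apply]
  change φ0 ((Ideal.quotientKerAlgEquivOfSurjective hπ).symm (π f)) = _
  rw [this, ← eval_eq_aeval]
  rfl

include hπ hy hfin in
lemma points_le_rank [IsDomain A] [FaithfulSMul (MvPolynomial (Fin d) ℂ) A] (hd : 1 ≤ d)
    (F : Finset (Fin n → ℂ)) (hF : ∀ p ∈ F, ∀ f ∈ RingHom.ker π, eval p f = 0)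
    (ℓ : Fin d → MvPolynomial (Fin n) ℂ) (hℓ : ∀ i, (ℓ i).totalDegree ≤ 1)
    (hℓ0 : ∀ p ∈ F, ∀ i, eval p (ℓ i) = 0)
    (hmin : ∀ Q : Ideal (MvPolynomial (Fin n) ℂ), Q.IsPrime → RingHom.ker π ≤ Q → (∀ i, ℓ i ∈ Q) →
      ∃ p ∈ F, RingHom.ker (eval p) ≤ Q) :
    F.card ≤ Module.finrank (MvPolynomial (Fin d) ℂ) A := by
  have := finite_of_degFin π hπ y hy hfin
  have hN : IsNoetherianRing A := isNoetherianRing_of_surjective _ _ π.toRingHom hπ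
  let p : Fin F.card → Fin n → ℂ := fun j => (F.equivFin.symm j : Fin n → ℂ)
  have hpF : ∀ j, p j ∈ F := fun j => (F.equivFin.symm j).2
  have hpinj : Function.Injective p := fun a b h => F.equivFin.symm.injective (Subtype.ext h)
  choose φ hφ using fun j => exists_lift_eval π hπ (p j) (hF _ (hpF j))
  obtain ⟨q, hq⟩ := exists_interp p hpinj
  refine card_le_rank π y hy hfin q ℓ hℓ ?_
  intro Φ hΦ
  have hmax : ∀ j, (RingHom.ker (φ j)).IsMaximal := fun j => 
    RingHom.ker_isMaximal_of_surjective _ (fun c => ⟨algebraMap ℂ A c, by simp⟩)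
  have hmaxe : ∀ p : Fin n → ℂ, (RingHom.ker (eval p)).IsMaximal := fun p => 
    RingHom.ker_isMaximal_of_surjective _ (fun c => ⟨C c, by simp⟩)
  refine indep_lower φ (fun i => π (ℓ i)) (fun j i => by rw [hφ]; exact hℓ0 _ (hpF j) i) ?_
    (fun j => height_max_of_inj _ (hmax j)) hd (fun j => π (q j)) (fun i j => by rw [hφ, hq]) Φ ?_
  · intro j Q hQ hℓQ hle
    have hQ' : (Q.comap π).IsPrime := Ideal.comap_isPrime _ _
    obtain ⟨p', hp', hle'⟩ := hmin (Q.comap π) hQ' (fun f hf => by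
      rw [Ideal.mem_comap, (RingHom.mem_ker).1 hf]; exact Q.zero_mem) hℓQ
    have h1 : RingHom.ker (eval p') ≤ RingHom.ker (eval (p j)) := by
      refine hle'.trans fun f hf => ?_
      have := hle hf
      rwa [RingHom.mem_ker, hφ] at this
    have h2 := (hmaxe p').eq_of_le (hmaxe (p j)).ne_top h1
    intro a ha
    obtain ⟨f, rfl⟩ := hπ a
    apply hle'
    rw [h2, RingHom.mem_ker, ← hφ]
    exact ha
  · rw [← hΦ]
    refine Finset.sum_congr rfl fun j _ => ?_
    congr 1
    rw [← AlgHom.comp_apply, comp_aeval]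

/-- equations of an affine subspace -/
lemma exists_equations {n d : ℕ} (hdn : d ≤ n) (L : AffineSubspace ℂ (Fin n → ℂ)) (p0 : Fin n → ℂ) (hp0 : p0 ∈ L)
    (hL : Module.finrank ℂ L.direction = n - d) :
    ∃ ℓ : Fin d → MvPolynomial (Fin n) ℂ, (∀ i, (ℓ i).totalDegree ≤ 1) ∧
      ∀ x, x ∈ L ↔ ∀ i, eval x (ℓ i) = 0 := by
  have h1 : Module.finrank ℂ L.direction.dualAnnihilator = d := by
    have := Subspace.finrank_add_finrank_dualAnnihilator_eq L.direction
    rw [hL] at this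
    simp at this
    omega
  let b := Module.finBasisOfFinrankEq ℂ L.direction.dualAnnihilator h1
  let ℓ : Fin d → MvPolynomial (Fin n) ℂ := fun i =>
    ∑ j, C ((b i).1 (Pi.single j 1)) * (X j - C (p0 j))
  have hev : ∀ x i, eval x (ℓ i) = (b i).1 (x - p0) := by
    intro x i
    have : (x - p0) = ∑ j, (x j - p0 j) • (Pi.single j 1 : Fin n → ℂ) := by
      ext t; simp [Finset.sum_apply, Pi.single_apply]
    conv_rhs => rw [this, map_sum]
    simp only [ℓ, map_sum, map_mul, eval_C, map_sub, eval_X, map_smul, smul_eq_mul]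
    exact Finset.sum_congr rfl fun j _ => mul_comm _ _
  refine ⟨ℓ, fun i => ?_, fun x => ?_⟩
  · refine totalDegree_finsetSum_le fun j _ => (totalDegree_mul _ _).trans ?_
    rw [totalDegree_C, zero_add]
    exact (totalDegree_sub _ _).trans (by simp)
  · rw [← AffineSubspace.vsub_right_mem_direction_iff_mem hp0, vsub_eq_sub]
    simp only [hev]
    constructor
    · intro h i
      exact (Submodule.mem_dualAnnihilator _).1 (b i).2 _ h
    · intro h
      rw [← Subspace.dualAnnihilator_dualCoannihilator_eq (W := L.direction), Submodule.mem_dualCoannihilator]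
      intro φ hφ
      have h3 := b.sum_repr ⟨φ, hφ⟩
      have h4 : φ = ∑ i, (b.repr ⟨φ, hφ⟩ i) • (b i).1 := by
        have := congrArg Subtype.val h3
        rw [AddSubmonoidClass.coe_finset_sum] at this
        exact this.symm
      rw [h4, LinearMap.sum_apply]
      exact Finset.sum_eq_zero fun i _ => by simp [h i]
end Pts
end Paper

namespace Paper
section Geom
set_option linter.unusedSimpArgs false
variable {n : ℕ}

lemma mem_vi {V : Set (Fin n → ℂ)} {f : MvPolynomial (Fin n) ℂ} :
    f ∈ vanishingIdeal n V ↔ ∀ x ∈ V, eval x f = 0 := Iff.rfl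

lemma mem_zl {I : Set (MvPolynomial (Fin n) ℂ)} {x : Fin n → ℂ} :
    x ∈ zeroLocus n I ↔ ∀ f ∈ I, eval x f = 0 := Iff.rfl

lemma vi_zl (Q : Ideal (MvPolynomial (Fin n) ℂ)) (hQ : Q.IsPrime) :
    vanishingIdeal n (zeroLocus n (Q : Set (MvPolynomial (Fin n) ℂ))) = Q := by
  have h := MvPolynomial.IsPrime.vanishingIdeal_zeroLocus (K := ℂ) Q
  conv_rhs => rw [← h]
  ext f
  rw [mem_vi, MvPolynomial.mem_vanishingIdeal_iff]
  simp only [MvPolynomial.mem_zeroLocus_iff, mem_zl, eval_eq_aeval, SetLike.mem_coe]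

lemma zl_vi {V : Set (Fin n → ℂ)} (hV : IsAlgebraicSet n V) :
    zeroLocus n (vanishingIdeal n V : Set (MvPolynomial (Fin n) ℂ)) = V := by
  obtain ⟨I, rfl⟩ := hV
  apply Subset.antisymm
  · intro x hx f hf
    exact hx f fun z hz => hz f hf
  · intro x hx f hf
    exact hf x hx

lemma vi_anti {V W : Set (Fin n → ℂ)} (h : V ⊆ W) : vanishingIdeal n W ≤ vanishingIdeal n V :=
  fun _ hf x hx => hf x (h hx)

lemma zl_anti {I J : Set (MvPolynomial (Fin n) ℂ)} (h : I ⊆ J) : zeroLocus n J ⊆ zeroLocus n I :=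
  fun _ hx f hf => hx f (h hf)

lemma irred_prime {W : Set (Fin n → ℂ)} (hW : IsIrredVariety n W) : (vanishingIdeal n W).IsPrime := by
  obtain ⟨_, ⟨x, hx⟩, h⟩ := hW
  refine ⟨?_, ?_⟩
  · rw [Ideal.ne_top_iff_one]
    intro h1
    simpa using h1 x hx
  · intro f g hfg
    have := h (zeroLocus n {f}) (zeroLocus n {g}) ⟨_, rfl⟩ ⟨_, rfl⟩ (by
      intro z hz
      have h2 := hfg z hz
      rw [map_mul, mul_eq_zero] at h2
      simpa [mem_zl] using h2)
    rcases this with h3 | h3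
    · exact Or.inl fun z hz => h3 hz f rfl
    · exact Or.inr fun z hz => h3 hz g rfl

lemma prime_irred (Q : Ideal (MvPolynomial (Fin n) ℂ)) (hQ : Q.IsPrime) :
    IsIrredVariety n (zeroLocus n (Q : Set (MvPolynomial (Fin n) ℂ))) := by
  refine ⟨⟨_, rfl⟩, ?_, ?_⟩
  · by_contra hne
    rw [Set.not_nonempty_iff_eq_empty] at hne
    apply hQ.ne_top
    rw [← vi_zl Q hQ, hne, Ideal.eq_top_iff_one]
    intro x hx; exact hx.elim
  · rintro V₁ V₂ ⟨I₁, rfl⟩ ⟨I₂, rfl⟩ h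
    by_contra! hc
    obtain ⟨h1, h2⟩ := hc
    obtain ⟨x, hx, hx1⟩ := Set.not_subset.1 h1
    obtain ⟨z, hz, hz1⟩ := Set.not_subset.1 h2
    simp only [mem_zl, not_forall] at hx1 hz1
    obtain ⟨f, hf, hfx⟩ := hx1
    obtain ⟨g, hg, hgz⟩ := hz1
    have : f * g ∈ Q := by
      rw [← vi_zl Q hQ]
      intro w hw
      rcases h hw with h3 | h3
      · simp [h3 f hf]
      · simp [h3 g hg]
    rcases hQ.mem_or_mem this with h3 | h3
    · exact hfx (hx f h3)
    · exact hgz (hz g h3)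

lemma zl_span (G : Set (MvPolynomial (Fin n) ℂ)) :
    zeroLocus n (Ideal.span G : Set (MvPolynomial (Fin n) ℂ)) = zeroLocus n G := by
  apply Subset.antisymm (zl_anti Ideal.subset_span)
  intro x hx f hf
  have : Ideal.span G ≤ RingHom.ker (eval x) := Ideal.span_le.2 fun g hg => hx g hg
  exact this hf

lemma comp_minimal {G : Set (MvPolynomial (Fin n) ℂ)} {W : Set (Fin n → ℂ)}
    (h : IsIrredComponent n W (zeroLocus n G)) :
    vanishingIdeal n W ∈ (Ideal.span G).minimalPrimes := by
  obtain ⟨hW, hsub, hmax⟩ := h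
  refine ⟨⟨irred_prime hW, Ideal.span_le.2 fun g hg x hx => hsub hx g hg⟩, ?_⟩
  rintro Q ⟨hQ, hGQ⟩ hle
  have h1 := hmax _ (prime_irred Q hQ) (by
    rw [← zl_vi hW.1]
    exact zl_anti hle) (by
    rw [← zl_span G]; exact zl_anti hGQ)
  rw [← h1, vi_zl Q hQ]

lemma minimal_comp {G : Set (MvPolynomial (Fin n) ℂ)} {Q : Ideal (MvPolynomial (Fin n) ℂ)}
    (h : Q ∈ (Ideal.span G).minimalPrimes) :
    IsIrredComponent n (zeroLocus n (Q : Set (MvPolynomial (Fin n) ℂ))) (zeroLocus n G) := by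
  obtain ⟨⟨hQ, hGQ⟩, hmin⟩ := h
  refine ⟨prime_irred Q hQ, ?_, ?_⟩
  · rw [← zl_span G]; exact zl_anti hGQ
  · intro W' hW' h1 h2
    have h3 : vanishingIdeal n W' ≤ Q := by
      rw [← vi_zl Q hQ]; exact vi_anti h1
    have h4 := hmin ⟨irred_prime hW', Ideal.span_le.2 fun g hg x hx => h2 hx g hg⟩ h3
    have : Q = vanishingIdeal n W' := le_antisymm h4 h3
    rw [this, zl_vi hW'.1]

lemma finite_comps {V : Set (Fin n → ℂ)} (hV : IsAlgebraicSet n V) :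
    {W | IsIrredComponent n W V}.Finite := by
  obtain ⟨G, rfl⟩ := hV
  refine Set.Finite.of_injOn (f := vanishingIdeal n) (t := (Ideal.span G).minimalPrimes) ?_ ?_
    (Ideal.finite_minimalPrimes_of_isNoetherianRing _ _)
  · intro W hW
    exact comp_minimal hW
  · intro W hW W' hW' h
    rw [← zl_vi hW.1.1, ← zl_vi hW'.1.1, h]

lemma exists_comp {V : Set (Fin n → ℂ)} (hV : IsAlgebraicSet n V) {x : Fin n → ℂ} (hx : x ∈ V) :
    ∃ W, IsIrredComponent n W V ∧ x ∈ W := by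
  obtain ⟨G, rfl⟩ := hV
  have h1 : Ideal.span G ≤ RingHom.ker (eval x) := Ideal.span_le.2 fun g hg => hx g hg
  have : (RingHom.ker (eval x)).IsPrime := RingHom.ker_isPrime _
  obtain ⟨Q, hQ, hle⟩ := Ideal.exists_minimalPrimes_le h1
  exact ⟨_, minimal_comp hQ, fun f hf => hle hf⟩

lemma hasChain_iff {W : Set (Fin n → ℂ)} (hW : IsIrredVariety n W) (k : ℕ) :
    HasChain n W k ↔ (k : WithBot ℕ∞) ≤ ringKrullDim (MvPolynomial (Fin n) ℂ ⧸ vanishingIdeal n W) := by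
  rw [ringKrullDim_quotient, Order.le_krullDim_iff]
  constructor
  · rintro ⟨U, hU, hlt, hlast⟩
    refine ⟨⟨k, fun i => ⟨⟨vanishingIdeal n (U i.rev), irred_prime (hU _)⟩, ?_⟩, ?_⟩, rfl⟩
    · refine vi_anti (Subset.trans ?_ hlast)
      rcases (Fin.le_last i.rev).eq_or_lt with h | h
      · rw [h]
      · exact (hlt _ _ h).subset
    · intro i
      have h1 := hlt i.succ.rev i.castSucc.rev (by simp)
      change vanishingIdeal n _ < vanishingIdeal n _
      refine lt_of_le_of_ne (vi_anti h1.subset) fun h => h1.ne ?_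
      rw [← zl_vi (hU _).1, ← h, zl_vi (hU _).1]
  · rintro ⟨l, rfl⟩
    refine ⟨fun i => zeroLocus n ((l i.rev).1.asIdeal : Set (MvPolynomial (Fin n) ℂ)),
      fun i => prime_irred _ (l i.rev).1.isPrime, ?_, ?_⟩
    · intro i j hij
      have h1 : l j.rev < l i.rev := l.strictMono (by simpa using hij)
      have h2 : (l j.rev).1.asIdeal < (l i.rev).1.asIdeal := h1
      refine (zl_anti h2.le).ssubset_of_ne fun h => h2.ne ?_
      rw [← vi_zl _ (l j.rev).1.isPrime, ← h, vi_zl _ (l i.rev).1.isPrime]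
    · conv_rhs => rw [← zl_vi hW.1]
      exact zl_anti (l _).2

lemma dim_eq {W : Set (Fin n → ℂ)} (hW : IsIrredVariety n W) {e : ℕ}
    (h : ringKrullDim (MvPolynomial (Fin n) ℂ ⧸ vanishingIdeal n W) = e) : dim n W = e := by
  have : {k | HasChain n W k} = Set.Iic e := by
    ext k
    simp only [Set.mem_ofPred_eq, hasChain_iff hW, h, Set.mem_Iic]
    norm_cast
  rw [dim, this]
  exact csSup_Iic

end Geom
end Paper

namespace Paper
section CRing
variable {n d : ℕ}

/-- coordinate ring, viewed as an algebra over the polynomial ring in the `y i` -/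
def CR (P : Ideal (MvPolynomial (Fin n) ℂ)) (_y : Fin d → MvPolynomial (Fin n) ℂ) : Type :=
  MvPolynomial (Fin n) ℂ ⧸ P

noncomputable instance (P : Ideal (MvPolynomial (Fin n) ℂ)) (y : Fin d → MvPolynomial (Fin n) ℂ) : CommRing (CR P y) :=
  Ideal.Quotient.commRing P

noncomputable instance (P : Ideal (MvPolynomial (Fin n) ℂ)) (y : Fin d → MvPolynomial (Fin n) ℂ) : Algebra ℂ (CR P y) :=
  Ideal.Quotient.algebra ℂ (I := P)

/-- the quotient map -/
noncomputable def crπ (P : Ideal (MvPolynomial (Fin n) ℂ)) (y : Fin d → MvPolynomial (Fin n) ℂ) :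
    MvPolynomial (Fin n) ℂ →ₐ[ℂ] CR P y := Ideal.Quotient.mkₐ ℂ P

noncomputable instance (P : Ideal (MvPolynomial (Fin n) ℂ)) (y : Fin d → MvPolynomial (Fin n) ℂ) :
    Algebra (MvPolynomial (Fin d) ℂ) (CR P y) := ((crπ P y).comp (aeval y)).toRingHom.toAlgebra

instance (P : Ideal (MvPolynomial (Fin n) ℂ)) (y : Fin d → MvPolynomial (Fin n) ℂ) :
    IsScalarTower ℂ (MvPolynomial (Fin d) ℂ) (CR P y) :=
  IsScalarTower.of_algebraMap_eq fun r => (((crπ P y).comp (aeval y)).commutes r).symm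

variable (P : Ideal (MvPolynomial (Fin n) ℂ)) (y : Fin d → MvPolynomial (Fin n) ℂ)

lemma crπ_surj : Function.Surjective (crπ P y) := Ideal.Quotient.mk_surjective

lemma crπ_ker : RingHom.ker (crπ P y) = P := Ideal.Quotient.mkₐ_ker ℂ P

lemma crπ_eq_zero (f) : crπ P y f = 0 ↔ f ∈ P := Ideal.Quotient.eq_zero_iff_mem

lemma crπ_hy (F) : crπ P y (aeval y F) = algebraMap (MvPolynomial (Fin d) ℂ) (CR P y) F := rfl

lemma cr_dom (hP : P.IsPrime) : IsDomain (CR P y) := inferInstanceAs (IsDomain (MvPolynomial (Fin n) ℂ ⧸ P))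

lemma cr_noeth : IsNoetherianRing (CR P y) := inferInstanceAs (IsNoetherianRing (MvPolynomial (Fin n) ℂ ⧸ P))

lemma cr_finite (h : DegFin P y) : Module.Finite (MvPolynomial (Fin d) ℂ) (CR P y) :=
  finite_of_degFin (crπ P y) (crπ_surj P y) y (crπ_hy P y) (by rwa [crπ_ker])

lemma cr_faithful (h : ∀ F : MvPolynomial (Fin d) ℂ, aeval y F ∈ P → F = 0) : FaithfulSMul (MvPolynomial (Fin d) ℂ) (CR P y) := by
  rw [faithfulSMul_iff_algebraMap_injective, injective_iff_map_eq_zero]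
  intro F hF
  rw [← crπ_hy, crπ_eq_zero] at hF
  exact h F hF

lemma krull_eq {W : Set (Fin n → ℂ)} (hW : IsIrredVariety n W) :
    ringKrullDim (MvPolynomial (Fin n) ℂ ⧸ vanishingIdeal n W) = (dim n W : ℕ) := by
  have := irred_prime hW
  have h1 : ringKrullDim (MvPolynomial (Fin n) ℂ ⧸ vanishingIdeal n W) ≤ n := by
    rw [← ringKrullDim_mvPoly n]
    exact ringKrullDim_quotient_le _
  have h0 : 0 ≤ ringKrullDim (MvPolynomial (Fin n) ℂ ⧸ vanishingIdeal n W) := ringKrullDim_nonneg_of_nontrivial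
  obtain ⟨k, hk⟩ : ∃ k : ℕ, ringKrullDim (MvPolynomial (Fin n) ℂ ⧸ vanishingIdeal n W) = k := by
    generalize ringKrullDim (MvPolynomial (Fin n) ℂ ⧸ vanishingIdeal n W) = z at h0 h1
    induction z with
    | bot => simp at h0
    | coe z =>
      induction z with
      | top => exact absurd h1 (by
          intro h
          have := WithBot.coe_le_coe.1 h
          exact absurd this (by simp))
      | coe z => exact ⟨z, rfl⟩
  rw [hk, dim_eq hW hk]

lemma dim_le {W : Set (Fin n → ℂ)} (hW : IsIrredVariety n W) : dim n W ≤ n := by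
  have h1 : ringKrullDim (MvPolynomial (Fin n) ℂ ⧸ vanishingIdeal n W) ≤ n := by
    rw [← ringKrullDim_mvPoly n]
    exact ringKrullDim_quotient_le _
  rw [krull_eq hW] at h1
  exact_mod_cast h1

lemma setup {V : Set (Fin n → ℂ)} (hV : IsAlgSetOfDim n V d) :
    ∃ y : Fin d → MvPolynomial (Fin n) ℂ, (∀ i, (y i).totalDegree ≤ 1) ∧
      ∀ W, IsIrredComponent n W V → DegFin (vanishingIdeal n W) y ∧
        ∀ F : MvPolynomial (Fin d) ℂ, aeval y F ∈ vanishingIdeal n W → F = 0 := by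
  classical
  obtain ⟨hA, ⟨x0, hx0⟩, hdim⟩ := hV
  obtain ⟨e, y, hy1, hfin, hinj⟩ := exists_normalization (vanishingIdeal n V) (by
    rw [Ideal.ne_top_iff_one]
    intro h1
    simpa using h1 x0 hx0)
  have hfinW : ∀ W, IsIrredComponent n W V → DegFin (vanishingIdeal n W) y :=
    fun W hW => hfin.mono (vi_anti hW.2.1)
  have hno : ∀ W, IsIrredComponent n W V → (∃ F : MvPolynomial (Fin e) ℂ, F ≠ 0 ∧ aeval y F ∈ vanishingIdeal n W) → d + 1 ≤ e := by
    rintro W hW ⟨F, hF0, hF⟩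
    have := cr_dom _ y (irred_prime hW.1)
    have := cr_finite _ y (hfinW W hW)
    have h1 := dim_of_not_inj (e := e) (A := CR (vanishingIdeal n W) y)
      ⟨F, hF0, by rw [← crπ_hy, crπ_eq_zero]; exact hF⟩
    have h2 : ringKrullDim (CR (vanishingIdeal n W) y) = d := by
      rw [← hdim W hW]; exact krull_eq hW.1
    rw [h2] at h1
    exact_mod_cast h1
  have hyes : ∀ W, IsIrredComponent n W V → (∀ F : MvPolynomial (Fin e) ℂ, aeval y F ∈ vanishingIdeal n W → F = 0) → e = d := by
    intro W hW h
    have := cr_dom _ y (irred_prime hW.1)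
    have := cr_finite _ y (hfinW W hW)
    have := cr_noeth (vanishingIdeal n W) y
    have := cr_faithful _ y h
    have h1 := dim_of_inj (e := e) (A := CR (vanishingIdeal n W) y)
    have h2 : ringKrullDim (CR (vanishingIdeal n W) y) = d := by
      rw [← hdim W hW]; exact krull_eq hW.1
    rw [h2] at h1
    exact_mod_cast h1.symm
  have hex : ∃ W, IsIrredComponent n W V ∧ ∀ F : MvPolynomial (Fin e) ℂ, aeval y F ∈ vanishingIdeal n W → F = 0 := by
    by_contra! hc
    choose! F hF hF0 using hc
    have h1 : aeval y (∏ W ∈ (finite_comps hA).toFinset, F W) ∈ vanishingIdeal n V := by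
      intro x hx
      obtain ⟨W, hW, hxW⟩ := exists_comp hA hx
      rw [map_prod, map_prod]
      exact Finset.prod_eq_zero (i := W) (by simpa using hW) (hF W hW x hxW)
    have h2 := hinj _ h1
    rw [Finset.prod_eq_zero_iff] at h2
    obtain ⟨W, hW, h3⟩ := h2
    exact hF0 W (by simpa using hW) h3
  obtain ⟨W, hW, h⟩ := hex
  obtain rfl := hyes W hW h
  refine ⟨y, hy1, fun W' hW' => ⟨hfinW W' hW', fun F hF => ?_⟩⟩
  by_contra h0
  have := hno W' hW' ⟨F, h0, hF⟩
  omega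

end CRing
end Paper

namespace Paper
section Deg
variable {n d : ℕ}

lemma degree_one_form (f : MvPolynomial (Fin n) ℂ) (hf : f.totalDegree ≤ 1) :
    f = C (coeff 0 f) + ∑ j, C (coeff (Finsupp.single j 1) f) * X j := by
  classical
  ext m
  rw [coeff_add, coeff_C, coeff_sum]
  simp only [coeff_C_mul, coeff_X]
  by_cases h0 : m = 0
  · subst h0
    simp
  · rw [if_neg (Ne.symm h0), zero_add]
    obtain ⟨j, hj⟩ := Finsupp.ne_iff.1 h0
    by_cases h1 : m = Finsupp.single j 1
    · subst h1
      rw [Finset.sum_eq_single j]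
      · simp
      · intro i _ hij
        rw [if_neg, mul_zero]
        rw [Finsupp.single_left_inj one_ne_zero]
        exact hij
      · simp
    · rw [Finset.sum_eq_zero]
      · apply coeff_eq_zero_of_totalDegree_lt
        refine lt_of_le_of_lt hf ?_
        have h2 : m j + ∑ i ∈ m.support.erase j, m i = ∑ i ∈ m.support, m i :=
          Finset.add_sum_erase _ _ (by simpa using hj)
        rw [← h2]
        simp only [Finsupp.coe_zero, Pi.zero_apply] at hj
        by_contra hlt
        apply h1
        ext i
        by_cases hi : i = j
        · subst hi; simp; omega
        · rw [Finsupp.single_apply, if_neg (Ne.symm hi)]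
          by_contra hmi
          have h3 : m i ≤ ∑ i ∈ m.support.erase j, m i :=
            Finset.single_le_sum (f := fun i => m i) (fun _ _ => Nat.zero_le _) (by simp [hi, hmi])
          omega
      · intro i _
        rw [if_neg, mul_zero]
        rintro rfl
        by_cases hij : i = j
        · subst hij; exact h1 rfl
        · simp [Finsupp.single_apply, hij] at hj

lemma finite_fibre (P : Ideal (MvPolynomial (Fin n) ℂ)) (y : Fin d → MvPolynomial (Fin n) ℂ)
    (hfin : DegFin P y) (c : Fin d → ℂ) :
    {x : Fin n → ℂ | (∀ f ∈ P, eval x f = 0) ∧ ∀ i, eval x (y i) = c i}.Finite := by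
  have := cr_finite P y hfin
  have hint : ∀ j, IsIntegral (MvPolynomial (Fin d) ℂ) (crπ P y (X j)) := fun j =>
    Algebra.IsIntegral.isIntegral _
  choose q hq1 hq2 using hint
  refine Set.Finite.subset (Set.Finite.pi' (t := fun j => {z : ℂ | ((q j).map (eval c)).IsRoot z})
    fun j => Polynomial.finite_setOfPred_isRoot ((hq1 j).map _).ne_zero) ?_
  rintro x ⟨hx, hc⟩ j
  obtain ⟨φ, hφ⟩ := exists_lift_eval (crπ P y) (crπ_surj P y) x (by rw [crπ_ker]; exact hx)
  have h1 := congrArg φ (hq2 j)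
  rw [map_zero, ← AlgHom.coe_toRingHom, Polynomial.hom_eval₂] at h1
  have h2 : (φ.toRingHom).comp (algebraMap (MvPolynomial (Fin d) ℂ) (CR P y)) = eval c := by
    apply MvPolynomial.ringHom_ext
    · intro r
      simp only [RingHom.comp_apply, eval_C]
      change φ (algebraMap _ _ (algebraMap ℂ _ r)) = _
      rw [← IsScalarTower.algebraMap_apply, AlgHom.commutes]; rfl
    · intro i
      simp only [RingHom.comp_apply, eval_X]
      change φ (algebraMap _ _ _) = _
      rw [← crπ_hy, hφ, aeval_X, hc]
  rw [show ((φ : CR P y →+* ℂ)) = φ.toRingHom from rfl, h2] at h1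
  have h3 : φ.toRingHom (crπ P y (X j)) = x j := by
    change φ _ = _
    rw [hφ, eval_X]
  rw [h3] at h1
  change Polynomial.eval _ _ = 0
  rw [Polynomial.eval_map]
  exact h1

lemma mem_degree_le {W : Set (Fin n → ℂ)} (hW : IsIrredVariety n W) (hd : 1 ≤ d) (hdim : dim n W = d)
    (y : Fin d → MvPolynomial (Fin n) ℂ) (hfin : DegFin (vanishingIdeal n W) y)
    (hinj : ∀ F : MvPolynomial (Fin d) ℂ, aeval y F ∈ vanishingIdeal n W → F = 0)
    (L : AffineSubspace ℂ (Fin n → ℂ)) (hL : Module.finrank ℂ L.direction = n - dim n W)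
    (hf : (W ∩ ↑L).Finite) :
    (W ∩ ↑L).ncard ≤ Module.finrank (MvPolynomial (Fin d) ℂ) (CR (vanishingIdeal n W) y) := by
  rcases (W ∩ (L : Set (Fin n → ℂ))).eq_empty_or_nonempty with h0 | ⟨p0, hp0⟩
  · rw [h0, ncard_empty]; exact Nat.zero_le _
  have hdn := dim_le hW
  rw [hdim] at hL hdn
  obtain ⟨ℓ, hℓ1, hℓ⟩ := exists_equations hdn L p0 hp0.2 hL
  rw [Set.ncard_eq_toFinset_card _ hf]
  have := cr_dom _ y (irred_prime hW)
  have := cr_faithful _ y hinj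
  refine points_le_rank (crπ (vanishingIdeal n W) y) (crπ_surj _ y) y (crπ_hy _ y) (by rwa [crπ_ker]) hd
    hf.toFinset ?_ ℓ hℓ1 ?_ ?_
  · intro p hp f hfk
    rw [crπ_ker] at hfk
    rw [Set.Finite.mem_toFinset] at hp
    exact hfk p hp.1
  · intro p hp
    rw [Set.Finite.mem_toFinset] at hp
    exact (hℓ p).1 hp.2
  · intro Q hQ hPQ hℓQ
    rw [crπ_ker] at hPQ
    have h1 : hf.toFinset.inf (fun p => RingHom.ker (eval p)) ≤ Q := by
      intro f hff
      rw [Submodule.mem_finsetInf] at hff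
      rw [← vi_zl Q hQ]
      intro x hx
      refine hff x ?_
      rw [Set.Finite.mem_toFinset]
      refine ⟨?_, (hℓ x).2 fun i => hx _ (hℓQ i)⟩
      rw [← zl_vi hW.1]
      exact zl_anti hPQ hx
    exact (Ideal.IsPrime.inf_le' hQ).1 h1

lemma degree_bounds {W : Set (Fin n → ℂ)} (hW : IsIrredVariety n W) (hd : 1 ≤ d) (hdim : dim n W = d)
    (y : Fin d → MvPolynomial (Fin n) ℂ) (hy1 : ∀ i, (y i).totalDegree ≤ 1)
    (hfin : DegFin (vanishingIdeal n W) y)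
    (hinj : ∀ F : MvPolynomial (Fin d) ℂ, aeval y F ∈ vanishingIdeal n W → F = 0) :
    1 ≤ degree n W ∧
      degree n W ≤ Module.finrank (MvPolynomial (Fin d) ℂ) (CR (vanishingIdeal n W) y) := by
  classical
  have hub : ∀ m ∈ { m | ∃ L : AffineSubspace ℂ (Fin n → ℂ),
    Module.finrank ℂ L.direction = n - dim n W ∧ (W ∩ ↑L).Finite ∧ (W ∩ ↑L).ncard = m },
      m ≤ Module.finrank (MvPolynomial (Fin d) ℂ) (CR (vanishingIdeal n W) y) := by
    rintro m ⟨L, hL, hf, rfl⟩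
    exact mem_degree_le hW hd hdim y hfin hinj L hL hf
  obtain ⟨p, hp⟩ := hW.2.1
  let φ : (Fin n → ℂ) →ₗ[ℂ] (Fin d → ℂ) :=
    LinearMap.pi fun i => ∑ j, (coeff (Finsupp.single j 1) (y i)) • LinearMap.proj j
  have hφ : ∀ x i, eval x (y i) = coeff 0 (y i) + φ x i := by
    intro x i
    conv_lhs => rw [degree_one_form (y i) (hy1 i)]
    simp [φ]
  have hsurj : LinearMap.range φ = ⊤ := by
    by_contra hne
    obtain ⟨v, -, hv⟩ := SetLike.exists_of_lt (lt_top_iff_ne_top.2 hne)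
    obtain ⟨g, hg0, hg⟩ := Submodule.exists_le_ker_of_notMem hv
    let F : MvPolynomial (Fin d) ℂ :=
      ∑ i, C (g (Pi.single i 1)) * (X i - C (coeff 0 (y i)))
    have hg' : ∀ w, g w = ∑ i, g (Pi.single i 1) * w i := by
      intro w
      conv_lhs => rw [show w = ∑ i, w i • (Pi.single i 1 : Fin d → ℂ) by
        ext t; simp [Finset.sum_apply, Pi.single_apply]]
      rw [map_sum]
      simp [mul_comm]
    have hF : F = 0 := by
      apply hinj
      intro x _
      have h1 : g (φ x) = 0 := hg ⟨x, rfl⟩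
      rw [hg'] at h1
      simp only [F, map_sum, map_mul, map_sub, aeval_X]
      rw [← h1]
      refine Finset.sum_congr rfl fun i _ => ?_
      rw [hφ]; simp [algHom_C]
    apply hg0
    have h2 := congrArg (eval (fun i => coeff 0 (y i) + v i)) hF
    rw [hg']
    simpa [F] using h2
  let L := AffineSubspace.mk' p (LinearMap.ker φ)
  have hker : Module.finrank ℂ L.direction = n - dim n W := by
    have := LinearMap.finrank_range_add_finrank_ker φ
    rw [hsurj] at this
    simp at this
    rw [AffineSubspace.direction_mk']
    omega
  have hLf : (W ∩ ↑L).Finite := by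
    refine (finite_fibre (vanishingIdeal n W) y hfin (fun i => eval p (y i))).subset ?_
    rintro x ⟨hxW, hxL⟩
    refine ⟨fun f hf => hf x hxW, fun i => ?_⟩
    have h3 : φ (x - p) = 0 := (AffineSubspace.mem_mk').1 hxL
    rw [map_sub, sub_eq_zero] at h3
    rw [hφ, hφ, h3]
  have hpos : 1 ≤ (W ∩ ↑L).ncard := by
    refine (Set.ncard_pos hLf).2 ?_
    exact ⟨p, hp, AffineSubspace.self_mem_mk' _ _⟩
  constructor
  · exact hpos.trans (le_csSup ⟨_, hub⟩ ⟨L, hker, hLf, rfl⟩)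
  · exact csSup_le ⟨_, L, hker, hLf, rfl⟩ hub
end Deg
end Paper

namespace Paper
section Generic
variable {n d : ℕ}

/-- an algebraically closed field containing the polynomial ring -/
abbrev Om (d : ℕ) : Type := AlgebraicClosure (FractionRing (MvPolynomial (Fin d) ℂ))

lemma Om_inj (d : ℕ) : Function.Injective (algebraMap (MvPolynomial (Fin d) ℂ) (Om d)) := by
  rw [IsScalarTower.algebraMap_eq (MvPolynomial (Fin d) ℂ) (FractionRing (MvPolynomial (Fin d) ℂ)) (Om d)]
  rw [RingHom.coe_comp]
  exact (RingHom.injective _).comp (IsFractionRing.injective _ _)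

lemma exists_homs (A : Type) [CommRing A] [IsDomain A] [Algebra (MvPolynomial (Fin d) ℂ) A]
    [Module.Finite (MvPolynomial (Fin d) ℂ) A] [FaithfulSMul (MvPolynomial (Fin d) ℂ) A] :
    ∃ θ : Fin (Module.finrank (MvPolynomial (Fin d) ℂ) A) → (A →ₐ[MvPolynomial (Fin d) ℂ] Om d),
      Function.Injective θ := by
  have : FaithfulSMul (MvPolynomial (Fin d) ℂ) (FractionRing A) := by
    rw [faithfulSMul_iff_algebraMap_injective, IsScalarTower.algebraMap_eq (MvPolynomial (Fin d) ℂ) A (FractionRing A)]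
    rw [RingHom.coe_comp]
    exact (IsFractionRing.injective A (FractionRing A)).comp (FaithfulSMul.algebraMap_injective _ _)
  let _ := FractionRing.liftAlgebra (MvPolynomial (Fin d) ℂ) (FractionRing A)
  have h1 : Module.finrank (FractionRing (MvPolynomial (Fin d) ℂ)) (FractionRing A) =
    Module.finrank (MvPolynomial (Fin d) ℂ) A := IsFractionRing.finrank_eq _ _ _ _
  have : Module.IsTorsionFree (MvPolynomial (Fin d) ℂ) A := inferInstance
  have h2 : 0 < Module.finrank (MvPolynomial (Fin d) ℂ) A := Module.finrank_pos
  have : FiniteDimensional (FractionRing (MvPolynomial (Fin d) ℂ)) (FractionRing A) :=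
    Module.finite_of_finrank_pos (by rw [h1]; exact h2)
  have : CharZero (FractionRing (MvPolynomial (Fin d) ℂ)) := inferInstance
  have h3 := AlgHom.card (FractionRing (MvPolynomial (Fin d) ℂ)) (FractionRing A) (Om d)
  rw [h1] at h3
  let e := Fintype.equivFinOfCardEq h3
  refine ⟨fun i => ((e.symm i).restrictScalars (MvPolynomial (Fin d) ℂ)).comp
    (IsScalarTower.toAlgHom (MvPolynomial (Fin d) ℂ) A (FractionRing A)), ?_⟩
  intro i j hij
  apply e.symm.injective
  apply AlgHom.coe_ringHom_injective
  apply IsLocalization.ringHom_ext (nonZeroDivisors A)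
  ext a
  exact DFunLike.congr_fun hij a

lemma hom_ker (A : Type) [CommRing A] [IsDomain A] [Algebra (MvPolynomial (Fin d) ℂ) A]
    [Module.Finite (MvPolynomial (Fin d) ℂ) A]
    (θ : A →ₐ[MvPolynomial (Fin d) ℂ] Om d) (a : A) (ha : θ a = 0) : a = 0 := by
  have h : RingHom.ker θ.toRingHom = ⊥ := by
    apply Ideal.eq_bot_of_comap_eq_bot (R := MvPolynomial (Fin d) ℂ)
    rw [eq_bot_iff]
    intro F hF
    have h1 : θ (algebraMap _ _ F) = 0 := hF
    rw [AlgHom.commutes] at h1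
    exact (injective_iff_map_eq_zero _).1 (Om_inj d) _ h1
  have : a ∈ RingHom.ker θ.toRingHom := ha
  rw [h] at this
  exact this

/-- the generic points -/
lemma exists_points {ι : Type*} (P : ι → Ideal (MvPolynomial (Fin n) ℂ)) (hPinj : Function.Injective P)
    (hP : ∀ i, (P i).IsPrime) (y : Fin d → MvPolynomial (Fin n) ℂ) (hfin : ∀ i, DegFin (P i) y)
    (hinj : ∀ i, ∀ F : MvPolynomial (Fin d) ℂ, aeval y F ∈ P i → F = 0) :
    ∃ pt : (Σ i, Fin (Module.finrank (MvPolynomial (Fin d) ℂ) (CR (P i) y))) → Fin n → Om d,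
      Function.Injective pt ∧
      (∀ t f, aeval (pt t) f = 0 ↔ f ∈ P t.1) ∧
      (∀ t F, aeval (pt t) (aeval y F) = algebraMap (MvPolynomial (Fin d) ℂ) (Om d) F) := by
  have hθ : ∀ i, ∃ θ : Fin (Module.finrank (MvPolynomial (Fin d) ℂ) (CR (P i) y)) →
      (CR (P i) y →ₐ[MvPolynomial (Fin d) ℂ] Om d), Function.Injective θ := fun i => by
    have := cr_dom _ y (hP i)
    have := cr_finite _ y (hfin i)
    have := cr_faithful _ y (hinj i)
    exact exists_homs _
  choose θ hθinj using hθ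
  let pt : (Σ i, Fin (Module.finrank (MvPolynomial (Fin d) ℂ) (CR (P i) y))) → Fin n → Om d :=
    fun t j => θ t.1 t.2 (crπ (P t.1) y (X j))
  have hpt : ∀ t f, aeval (pt t) f = θ t.1 t.2 (crπ (P t.1) y f) := by
    intro t f
    have : (((θ t.1 t.2).restrictScalars ℂ).comp (crπ (P t.1) y)) = aeval (pt t) := by
      apply MvPolynomial.algHom_ext
      intro j
      simp [pt]
    rw [← this]; rfl
  have hker : ∀ t f, aeval (pt t) f = 0 ↔ f ∈ P t.1 := by
    intro t f
    rw [hpt]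
    have := cr_dom _ y (hP t.1)
    have := cr_finite _ y (hfin t.1)
    rw [← crπ_eq_zero _ y]
    exact ⟨hom_ker _ _ _, fun h => by rw [h, map_zero]⟩
  refine ⟨pt, ?_, hker, ?_⟩
  · intro t t' h
    have h1 : P t.1 = P t'.1 := by
      ext f
      rw [← hker, h, hker]
    obtain ⟨i, s⟩ := t
    obtain ⟨i', s'⟩ := t'
    obtain rfl := hPinj h1
    congr 1
    apply hθinj
    ext a
    obtain ⟨f, rfl⟩ := crπ_surj _ y a
    have h2 := hpt ⟨i, s⟩ f
    have h3 := hpt ⟨i, s'⟩ f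
    rw [← h, h2] at h3
    exact h3
  · intro t F
    rw [hpt, crπ_hy, AlgHom.commutes]

lemma isolated (P : Ideal (MvPolynomial (Fin n) ℂ)) (y : Fin d → MvPolynomial (Fin n) ℂ)
    (hfin : DegFin P y) (p : Fin n → Om d) (hker : ∀ f : MvPolynomial (Fin n) ℂ, aeval p f = 0 ↔ f ∈ P)
    (hpy : ∀ F, aeval p (aeval y F) = algebraMap (MvPolynomial (Fin d) ℂ) (Om d) F)
    (G : Set (MvPolynomial (Fin n) ℂ)) (hG : P ∈ (Ideal.span G).minimalPrimes) :
    RingHom.ker (eval p) ∈ (Ideal.span (MvPolynomial.map (algebraMap ℂ (Om d)) '' G ∪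
      Set.range (fun i => MvPolynomial.map (algebraMap ℂ (Om d)) (y i) -
        C (algebraMap (MvPolynomial (Fin d) ℂ) (Om d) (X i))))).minimalPrimes := by
  have hev : ∀ f : MvPolynomial (Fin n) ℂ, eval p (MvPolynomial.map (algebraMap ℂ (Om d)) f) = aeval p f := by
    intro f
    rw [eval_map, aeval_def]
  have hpr : (RingHom.ker (eval p)).IsPrime := RingHom.ker_isPrime _
  refine ⟨⟨hpr, ?_⟩, ?_⟩
  · rw [Ideal.span_le]
    rintro g (⟨g, hg, rfl⟩ | ⟨i, rfl⟩)
    · change eval p _ = 0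
      rw [hev, hker]
      exact hG.1.2 (Ideal.subset_span hg)
    · change eval p _ = 0
      have := hpy (X i)
      rw [aeval_X] at this
      rw [map_sub, hev, this, eval_C, sub_self]
  · rintro q ⟨hq, hGq⟩ hle
    have hcom : q.comap (MvPolynomial.map (algebraMap ℂ (Om d))) = P := by
      have hle' : q.comap (MvPolynomial.map (algebraMap ℂ (Om d))) ≤ P := by
        intro f hf
        rw [← hker, ← hev]
        exact hle hf
      refine le_antisymm hle' (hG.2 ⟨hq.comap _, ?_⟩ hle')
      rw [Ideal.span_le]
      intro g hg
      exact hGq (Ideal.subset_span (Or.inl ⟨g, hg, rfl⟩))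
    let D := MvPolynomial (Fin n) (Om d) ⧸ q
    let ψ : CR P y →+* D := Ideal.Quotient.lift P
      ((Ideal.Quotient.mk q).comp (MvPolynomial.map (algebraMap ℂ (Om d)))) (by
        intro a ha
        rw [← hcom] at ha
        exact Ideal.Quotient.eq_zero_iff_mem.2 ha)
    have hψ : ∀ f, ψ (crπ P y f) = Ideal.Quotient.mk q (MvPolynomial.map (algebraMap ℂ (Om d)) f) :=
      fun f => rfl
    have hcomp : (algebraMap (Om d) D).comp (algebraMap (MvPolynomial (Fin d) ℂ) (Om d)) =
        ψ.comp (algebraMap (MvPolynomial (Fin d) ℂ) (CR P y)) := by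
      apply MvPolynomial.ringHom_ext
      · intro r
        rw [RingHom.comp_apply, RingHom.comp_apply, ← crπ_hy, hψ]
        rw [algHom_C, algebraMap_eq, map_C]
        change _ = Ideal.Quotient.mk q (algebraMap (Om d) _ _)
        rw [← algebraMap_eq, ← IsScalarTower.algebraMap_apply ℂ (MvPolynomial (Fin d) ℂ) (Om d)]
        rfl
      · intro i
        rw [RingHom.comp_apply, RingHom.comp_apply, ← crπ_hy, hψ, aeval_X]
        symm
        change Ideal.Quotient.mk q _ = Ideal.Quotient.mk q (C _)
        rw [Ideal.Quotient.eq]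
        exact hGq (Ideal.subset_span (Or.inr ⟨i, rfl⟩))
    have := cr_finite P y hfin
    have hX : ∀ j, Ideal.Quotient.mk q (X j) = algebraMap (Om d) D (p j) := by
      intro j
      have h1 : IsIntegral (MvPolynomial (Fin d) ℂ) (crπ P y (X j)) := Algebra.IsIntegral.isIntegral _
      have h2 := h1.map_of_comp_eq _ ψ hcomp
      rw [hψ, map_X] at h2
      have : IsDomain D := Ideal.Quotient.isDomain q
      obtain ⟨r, hr'⟩ := (IsAlgClosed.algebraMap_bijective_of_isIntegral (k := Om d)
        (K := integralClosure (Om d) D)).2 ⟨_, h2⟩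
      have hr : algebraMap (Om d) D r = Ideal.Quotient.mk q (X j) := congrArg Subtype.val hr'
      have h3 : X j - C r ∈ q := by
        rw [← Ideal.Quotient.eq, ← hr]; rfl
      have h4 : eval p (X j - C r) = 0 := hle h3
      rw [map_sub, eval_X, eval_C, sub_eq_zero] at h4
      rw [h4, hr]
    intro f hf
    have h5 : Ideal.Quotient.mkₐ (Om d) q = aeval (fun j => algebraMap (Om d) D (p j)) := by
      apply MvPolynomial.algHom_ext
      intro j
      rw [aeval_X]
      exact hX j
    rw [← Ideal.Quotient.eq_zero_iff_mem]
    change Ideal.Quotient.mkₐ (Om d) q f = 0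
    rw [h5]
    change aeval (algebraMap (Om d) D ∘ p) f = 0
    rw [aeval_algebraMap_apply]
    have hf' : eval p f = 0 := hf
    rw [← coe_aeval_eq_eval] at hf'
    have hf2 : aeval p f = 0 := hf'
    rw [hf2, map_zero]

end Generic
end Paper

namespace Paper
section Fin13
variable {n d : ℕ}

/-- monomials with independent evaluation vectors -/
lemma exists_monomials {k : Type} [Field k] {T : Type} [Fintype T] (pt : T → Fin n → k) (K : ℕ)
    (h : ∀ t, ∃ f : MvPolynomial (Fin n) k, f.totalDegree ≤ K ∧ eval (pt t) f = 1 ∧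
      ∀ s, s ≠ t → eval (pt s) f = 0) :
    ∃ m : T → (Fin n →₀ ℕ), (∀ τ, ((m τ).sum fun _ e => e) ≤ K) ∧
      LinearIndependent k (fun τ t => eval (pt t) (monomial (m τ) (1 : k))) := by
  classical
  let v : {m : Fin n →₀ ℕ // (m.sum fun _ e => e) ≤ K} → T → k :=
    fun m t => eval (pt t) (monomial m.1 (1 : k))
  have hspan : Submodule.span k (range v) = ⊤ := by
    rw [eq_top_iff]
    intro w _
    choose f hf1 hf2 hf3 using h
    have h1 : ∀ g : MvPolynomial (Fin n) k, g.totalDegree ≤ K →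
        (fun t => eval (pt t) g) ∈ Submodule.span k (range v) := by
      intro g hg
      have : (fun t => eval (pt t) g) = ∑ m ∈ g.support, coeff m g • (fun t => eval (pt t) (monomial m (1 : k))) := by
        ext t
        conv_lhs => rw [g.as_sum, map_sum]
        rw [Finset.sum_apply]
        refine Finset.sum_congr rfl fun m _ => ?_
        rw [Pi.smul_apply, smul_eq_mul, eval_monomial, eval_monomial, one_mul]
      rw [this]
      refine Submodule.sum_mem _ fun m hm => Submodule.smul_mem _ _ (Submodule.subset_span ?_)
      exact ⟨⟨m, (le_totalDegree hm).trans hg⟩, rfl⟩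
    have h2 : w = ∑ t, w t • (fun s => eval (pt s) (f t)) := by
      ext s
      rw [Finset.sum_apply, Finset.sum_eq_single s]
      · simp [hf2]
      · intro t _ hts
        simp [hf3 t s (Ne.symm hts)]
      · simp
    rw [h2]
    exact Submodule.sum_mem _ fun t _ => Submodule.smul_mem _ _ (h1 _ (hf1 t))
  obtain ⟨κ, a, _, hs, hli⟩ := exists_linearIndependent' k v
  rw [hspan] at hs
  let b := Module.Basis.mk hli (by rw [hs])
  let e := b.indexEquiv (Pi.basisFun k T)
  refine ⟨fun τ => (a (e.symm τ)).1, fun τ => (a (e.symm τ)).2, ?_⟩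
  exact hli.comp e.symm e.symm.injective

/-- Siegel type linear algebra. -/
lemma siegel {Ω : Type} [Field Ω] [Algebra ℂ Ω] [Algebra (MvPolynomial (Fin d) ℂ) Ω]
    (hΩ : Function.Injective (algebraMap (MvPolynomial (Fin d) ℂ) Ω))
    {T : Type} [Fintype T] (pt : T → Fin n → Ω) (y : Fin d → MvPolynomial (Fin n) ℂ)
    (hy1 : ∀ i, (y i).totalDegree ≤ 1)
    (hy : ∀ t F, aeval (pt t) (aeval y F) = algebraMap (MvPolynomial (Fin d) ℂ) Ω F)
    (K M : ℕ) (m : T → (Fin n →₀ ℕ)) (hm : ∀ τ, ((m τ).sum fun _ e => e) ≤ K)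
    (hli : LinearIndependent Ω (fun τ t => eval (pt t) (monomial (m τ) (1 : Ω))))
    (S : Finset (Fin n → ℂ)) (hS : S.card < Fintype.card T * (M + 1) ^ d) :
    ∃ P : MvPolynomial (Fin n) ℂ, P.totalDegree ≤ K + d * M ∧ (∀ x ∈ S, eval x P = 0) ∧
      ∃ t, aeval (pt t) P ≠ 0 := by
  classical
  let mon : (Fin d → Fin (M+1)) → (Fin d →₀ ℕ) := fun a => Finsupp.equivFunOnFinite.symm fun i => (a i : ℕ)
  have hmon : Function.Injective mon := by
    intro a b hab
    funext i
    have := DFunLike.congr_fun hab i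
    exact Fin.ext this
  let Φ : (T → (Fin d → Fin (M+1)) → ℂ) → T → MvPolynomial (Fin d) ℂ :=
    fun c τ => ∑ a, monomial (mon a) (c τ a)
  let PP : (T × (Fin d → Fin (M+1)) → ℂ) →ₗ[ℂ] MvPolynomial (Fin n) ℂ :=
    ∑ z, (LinearMap.proj z).smulRight (monomial (m z.1) (1:ℂ) * aeval y (monomial (mon z.2) (1:ℂ)))
  have hPP : ∀ c, PP c = ∑ τ, monomial (m τ) (1:ℂ) * aeval y (∑ a, monomial (mon a) (c (τ, a))) := by
    intro c
    simp only [PP, LinearMap.sum_apply, LinearMap.smulRight_apply, LinearMap.proj_apply]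
    rw [Fintype.sum_prod_type]
    refine Finset.sum_congr rfl fun τ _ => ?_
    rw [map_sum, Finset.mul_sum]
    refine Finset.sum_congr rfl fun a _ => ?_
    rw [← mul_smul_comm, ← map_smul, smul_monomial, smul_eq_mul, mul_one]
  let ev : (T × (Fin d → Fin (M+1)) → ℂ) →ₗ[ℂ] (S → ℂ) :=
    (LinearMap.pi fun x : S => (aeval (R := ℂ) x.1).toLinearMap) ∘ₗ PP
  have hker : LinearMap.ker ev ≠ ⊥ := by
    apply LinearMap.ker_ne_bot_of_finrank_lt
    simpa using hS
  obtain ⟨c, hc, hc0⟩ := Submodule.exists_mem_ne_zero_of_ne_bot hker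
  refine ⟨PP c, ?_, ?_, ?_⟩
  · rw [hPP]
    refine totalDegree_finsetSum_le fun τ _ => (totalDegree_mul _ _).trans (add_le_add ?_ ?_)
    · exact (totalDegree_monomial_le _ _).trans (hm τ)
    · rw [map_sum]
      refine totalDegree_finsetSum_le fun a _ => ?_
      rw [aeval_monomial]
      refine (totalDegree_mul _ _).trans ?_
      rw [algebraMap_eq, totalDegree_C, zero_add, Finsupp.prod_fintype _ _ (by simp)]
      refine (totalDegree_finsetProd _ _).trans ?_
      refine (Finset.sum_le_card_nsmul _ _ M fun i _ => ?_).trans (by simp)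
      refine (totalDegree_pow _ _).trans ?_
      have h1 : mon a i ≤ M := Nat.lt_succ_iff.1 (a i).2
      calc mon a i * (y i).totalDegree ≤ M * 1 := Nat.mul_le_mul h1 (hy1 i)
        _ = M := mul_one _
  · intro x hx
    have := congrFun (LinearMap.mem_ker.1 hc) ⟨x, hx⟩
    rw [← eval_eq_aeval]
    exact this
  · by_contra! h
    apply hc0
    have h1 := Fintype.linearIndependent_iff.1 hli
      (fun τ => algebraMap (MvPolynomial (Fin d) ℂ) Ω (∑ a, monomial (mon a) (c (τ, a)))) (by
        ext t
        have h2 := h t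
        rw [hPP, map_sum] at h2
        rw [Finset.sum_apply, Pi.zero_apply, ← h2]
        refine Finset.sum_congr rfl fun τ _ => ?_
        rw [map_mul, hy, Pi.smul_apply, smul_eq_mul, mul_comm, aeval_monomial, eval_monomial, map_one])
    funext ⟨τ, a⟩
    have h2 := (injective_iff_map_eq_zero _).1 hΩ _ (h1 τ)
    have h3 := congrArg (coeff (mon a)) h2
    rw [coeff_sum, Finset.sum_eq_single a] at h3
    · simpa using h3
    · intro b _ hb
      rw [coeff_monomial, if_neg (fun h => hb (hmon h))]
    · simp
end Fin13
end Paper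

namespace Paper
section Fin14
variable {n d : ℕ}

lemma tdeg_map_le {k : Type*} [CommRing k] (φ : ℂ →+* k) (f : MvPolynomial (Fin n) ℂ) :
    (MvPolynomial.map φ f).totalDegree ≤ f.totalDegree :=
  Finset.sup_mono (support_map_subset φ f)

lemma degreeSum_eq {V : Set (Fin n → ℂ)} [Fintype {W | IsIrredComponent n W V}] :
    degreeSum n V = ∑ W : {W | IsIrredComponent n W V}, degree n W.1 := by
  rw [degreeSum, ← finsum_set_coe_eq_finsum_mem, finsum_eq_sum_of_fintype]

lemma core (hd : 1 ≤ d) {V : Set (Fin n → ℂ)} (hV : IsAlgSetOfDim n V d) :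
    1 ≤ degreeSum n V ∧ ∀ (G : Set (MvPolynomial (Fin n) ℂ)) (δ : ℕ), (∀ g ∈ G, g.totalDegree ≤ δ) →
      1 ≤ δ → (∀ W, IsIrredComponent n W V → IsIrredComponent n W (zeroLocus n G)) →
      ∀ (S : Finset (Fin n → ℂ)) (M : ℕ), S.card < degreeSum n V * (M + 1) ^ d →
      ∃ P : MvPolynomial (Fin n) ℂ, P.totalDegree ≤ n * δ + d * M ∧ (∀ x ∈ S, eval x P = 0) ∧
        P ∉ vanishingIdeal n V := by
  classical
  obtain ⟨y, hy1, hy⟩ := setup hV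
  have hfinite := finite_comps hV.1
  let _ : Fintype {W | IsIrredComponent n W V} := hfinite.fintype
  have hb := fun W : {W | IsIrredComponent n W V} =>
    degree_bounds W.2.1 hd (hV.2.2 W.1 W.2) y hy1 (hy W.1 W.2).1 (hy W.1 W.2).2
  constructor
  · obtain ⟨x, hx⟩ := hV.2.1
    obtain ⟨W, hW, _⟩ := exists_comp hV.1 hx
    rw [degreeSum_eq]
    refine (hb ⟨W, hW⟩).1.trans ?_
    exact Finset.single_le_sum (f := fun W : {W | IsIrredComponent n W V} => degree n W.1)
      (fun _ _ => Nat.zero_le _) (Finset.mem_univ (⟨W, hW⟩ : {W | IsIrredComponent n W V}))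
  · intro G δ hδ hδ1 hG S M hS
    obtain ⟨pt, hpinj, hker, hpy⟩ := exists_points
      (fun W : {W | IsIrredComponent n W V} => vanishingIdeal n W.1) (by
        intro W W' h
        apply Subtype.ext
        have h' : vanishingIdeal n W.1 = vanishingIdeal n W'.1 := h
        rw [← zl_vi W.2.1.1, ← zl_vi W'.2.1.1, h'])
      (fun W => irred_prime W.2.1) y (fun W => (hy W.1 W.2).1) (fun W => (hy W.1 W.2).2)
    have hiso := fun t => isolated _ y (hy t.1.1 t.1.2).1 (pt t) (hker t) (hpy t) G
      (comp_minimal (hG t.1.1 t.1.2))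
    obtain ⟨m, hm, hli⟩ := exists_monomials pt (n * δ) (by
      intro t
      obtain ⟨h, h1, h2, h3⟩ := sep_minimal (MvPolynomial.map (algebraMap ℂ (Om d)) '' G ∪
        Set.range (fun i => MvPolynomial.map (algebraMap ℂ (Om d)) (y i) -
          C (algebraMap (MvPolynomial (Fin d) ℂ) (Om d) (X i)))) δ (by
        rintro g (⟨g, hg, rfl⟩ | ⟨i, rfl⟩)
        · exact (tdeg_map_le _ _).trans (hδ g hg)
        · refine (totalDegree_sub _ _).trans (max_le ?_ ?_)
          · exact (tdeg_map_le _ _).trans ((hy1 i).trans hδ1)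
          · rw [totalDegree_C]; exact Nat.zero_le _) (range pt) (by
        rintro _ ⟨t, rfl⟩
        exact hiso t) (pt t) ⟨t, rfl⟩
      exact ⟨h, h1, h2, fun s hs => h3 _ ⟨s, rfl⟩ (fun h => hs (hpinj h))⟩)
    obtain ⟨P, hP1, hP2, t, ht⟩ := siegel (Om_inj d) pt y hy1 hpy (n * δ) M m hm hli S (by
      refine hS.trans_le (Nat.mul_le_mul_right _ ?_)
      rw [degreeSum_eq, Fintype.card_sigma]
      refine Finset.sum_le_sum fun W _ => ?_
      rw [Fintype.card_fin]
      exact (hb W).2)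
    refine ⟨P, hP1, hP2, fun hPV => ht ?_⟩
    rw [hker]
    exact vi_anti t.1.2.2.1 hPV

lemma delta_attained {V : Set (Fin n → ℂ)} (hV : IsAlgebraicSet n V) :
    ∃ I : Finset (MvPolynomial (Fin n) ℂ), (∀ f ∈ I, f.totalDegree ≤ deltaSet n V) ∧
      ∀ W, IsIrredComponent n W V → IsIrredComponent n W (zeroLocus n ↑I) := by
  refine Nat.sInf_mem (s := { δ | ∃ I : Finset (MvPolynomial (Fin n) ℂ),
    (∀ f ∈ I, f.totalDegree ≤ δ) ∧
      ∀ W, IsIrredComponent n W V → IsIrredComponent n W (zeroLocus n ↑I) }) ?_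
  obtain ⟨I, hI⟩ := (IsNoetherian.noetherian (vanishingIdeal n V) : (vanishingIdeal n V).FG)
  refine ⟨I.sup totalDegree, I, fun f hf => Finset.le_sup hf, ?_⟩
  intro W hW
  have : zeroLocus n (↑I : Set (MvPolynomial (Fin n) ℂ)) = V := by
    rw [← zl_span, ← zl_vi hV]
    congr 2
  rwa [this]

lemma irred_univ : IsIrredVariety n (Set.univ : Set (Fin n → ℂ)) := by
  have h := prime_irred (⊥ : Ideal (MvPolynomial (Fin n) ℂ)) Ideal.isPrime_bot
  have h2 : zeroLocus n ((⊥ : Ideal (MvPolynomial (Fin n) ℂ)) : Set (MvPolynomial (Fin n) ℂ)) = Set.univ := by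
    ext x; simp [mem_zl]
  rwa [h2] at h

/-- the case of constants -/
lemma delta_zero {V : Set (Fin n → ℂ)} (hV : IsAlgSetOfDim n V d) (h0 : deltaSet n V = 0) :
    degreeSum n V ≤ 1 := by
  obtain ⟨I, hI, hc⟩ := delta_attained hV.1
  rw [h0] at hI
  have huniv : ∀ W, IsIrredComponent n W V → W = Set.univ := by
    intro W hW
    have h1 := hc W hW
    obtain ⟨x, hx⟩ := h1.1.2.1
    refine (h1.2.2 Set.univ irred_univ (Set.subset_univ _) ?_).symm
    intro z _ f hf
    have h2 := h1.2.1 hx f hf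
    have h3 := totalDegree_eq_zero_iff_eq_C.1 (Nat.le_zero.1 (hI f hf))
    rw [h3, eval_C] at h2 ⊢
    exact h2
  have hd1 : degree n (Set.univ : Set (Fin n → ℂ)) ≤ 1 := by
    have hdim : dim n (Set.univ : Set (Fin n → ℂ)) = n := by
      apply dim_eq irred_univ
      have : vanishingIdeal n (Set.univ : Set (Fin n → ℂ)) = ⊥ := by
        have h := vi_zl (⊥ : Ideal (MvPolynomial (Fin n) ℂ)) Ideal.isPrime_bot
        rw [← h]
        congr 1
        ext x; simp [mem_zl]
      rw [this, ← ringKrullDim_mvPoly n]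
      exact ringKrullDim_eq_of_ringEquiv (RingEquiv.quotientBot _)
    refine csSup_le' ?_
    rintro m ⟨L, hL, hf, rfl⟩
    rw [hdim, Nat.sub_self, Submodule.finrank_eq_zero] at hL
    rw [Set.ncard_le_one hf]
    rintro a ⟨_, ha⟩ b ⟨_, hb⟩
    have := AffineSubspace.vsub_mem_direction ha hb
    rw [hL, Submodule.mem_bot, vsub_eq_sub, sub_eq_zero] at this
    exact this
  classical
  let _ : Fintype {W | IsIrredComponent n W V} := (finite_comps hV.1).fintype
  rw [degreeSum_eq]
  have hss : Subsingleton {W | IsIrredComponent n W V} :=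
    ⟨fun a b => Subtype.ext ((huniv _ a.2).trans (huniv _ b.2).symm)⟩
  refine (Finset.sum_le_card_nsmul _ _ 1 fun W _ => ?_).trans ?_
  · rw [huniv _ W.2]; exact hd1
  · simp only [smul_eq_mul, mul_one]
    exact Fintype.card_le_one_iff_subsingleton.2 hss
end Fin14

/-- Lemma 4.4 of the paper: a Siegel-type lemma for a finite set of complex
points and a (not necessarily irreducible) `d`-dimensional algebraic set `V`, with
`|S| ≥ τ δ(V)^d deg V`. -/
theorem statement13 (n d : ℕ) (hd : 1 ≤ d) (τ : ℝ) (hτ : 0 < τ) :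
    ∃ C : ℝ, 0 < C ∧
      ∀ V : Set (Fin n → ℂ), IsAlgSetOfDim n V d →
        ∀ S : Finset (Fin n → ℂ),
          τ * (deltaSet n V : ℝ) ^ d * (degreeSum n V : ℝ) ≤ (S.card : ℝ) →
          ∃ P : MvPolynomial (Fin n) ℂ,
            (P.totalDegree : ℝ) ≤
              C * ((S.card : ℝ) / (degreeSum n V : ℝ)) ^ ((1 : ℝ) / (d : ℝ)) ∧
            (∀ x ∈ S, eval x P = 0) ∧ P ∉ vanishingIdeal n V := by
  have hτp : 0 < τ⁻¹ ^ ((1:ℝ)/d) := Real.rpow_pos_of_pos (inv_pos.2 hτ) _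
  have hd0 : (0:ℝ) < d := by exact_mod_cast hd
  refine ⟨n * τ⁻¹ ^ ((1:ℝ)/d) + n + d, by positivity, ?_⟩
  intro V hV S hS
  obtain ⟨hD1, hcore⟩ := core hd hV
  have hDpos : (0:ℝ) < degreeSum n V := by exact_mod_cast hD1
  set X : ℝ := ((S.card : ℝ) / (degreeSum n V : ℝ)) ^ ((1 : ℝ) / (d : ℝ)) with hX
  have hq0 : (0:ℝ) ≤ (S.card : ℝ) / (degreeSum n V : ℝ) := by positivity
  have hX0 : 0 ≤ X := Real.rpow_nonneg hq0 _
  have hXd : X ^ d = (S.card : ℝ) / (degreeSum n V : ℝ) := by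
    rw [hX, ← Real.rpow_natCast, ← Real.rpow_mul hq0, one_div, inv_mul_cancel₀ hd0.ne', Real.rpow_one]
  rcases S.eq_empty_or_nonempty with rfl | hSne
  · refine ⟨1, ?_, by simp, ?_⟩
    · rw [totalDegree_one]; push_cast; positivity
    · intro h
      obtain ⟨x, hx⟩ := hV.2.1
      simpa using h x hx
  obtain ⟨I, hI, hc⟩ := delta_attained hV.1
  have hM : S.card < degreeSum n V * (⌊X⌋₊ + 1) ^ d := by
    have h1 : X < (⌊X⌋₊ : ℝ) + 1 := Nat.lt_floor_add_one X
    have h2 : X ^ d < ((⌊X⌋₊ : ℝ) + 1) ^ d := pow_lt_pow_left₀ h1 hX0 (by omega)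
    rw [hXd, div_lt_iff₀ hDpos] at h2
    rw [mul_comm]
    exact_mod_cast h2
  obtain ⟨P, hP1, hP2, hP3⟩ := hcore ↑I (max (deltaSet n V) 1) (fun g hg => (hI g hg).trans (le_max_left _ _))
    (le_max_right _ _) hc S ⌊X⌋₊ hM
  refine ⟨P, ?_, hP2, hP3⟩
  have hfl : (⌊X⌋₊ : ℝ) ≤ X := Nat.floor_le hX0
  have hmax : ((max (deltaSet n V) 1 : ℕ) : ℝ) ≤ (τ⁻¹ ^ ((1:ℝ)/d) + 1) * X := by
    rcases Nat.eq_zero_or_pos (deltaSet n V) with h0 | h0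
    · rw [h0]
      have h1 : degreeSum n V = 1 := le_antisymm (delta_zero hV h0) hD1
      have h2 : 1 ≤ X := by
        rw [hX, h1]
        apply Real.one_le_rpow
        · have : 1 ≤ S.card := hSne.card_pos
          simpa using this
        · positivity
      simp only [zero_le, sup_of_le_right, Nat.cast_one]
      nlinarith [mul_nonneg hτp.le hX0]
    · rw [max_eq_left h0]
      have h1 : (deltaSet n V : ℝ) ^ d ≤ τ⁻¹ * ((S.card : ℝ) / (degreeSum n V : ℝ)) := by
        rw [← div_eq_inv_mul, le_div_iff₀ hτ, le_div_iff₀ hDpos]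
        linarith
      have h2 : (deltaSet n V : ℝ) ≤ τ⁻¹ ^ ((1:ℝ)/d) * X := by
        rw [hX, ← Real.mul_rpow (inv_pos.2 hτ).le hq0]
        have h3 := Real.rpow_le_rpow (by positivity) h1 (z := (1:ℝ)/d) (by positivity)
        rwa [← Real.rpow_natCast, ← Real.rpow_mul (by positivity), mul_one_div, div_self hd0.ne',
          Real.rpow_one] at h3
      nlinarith
  have hP1' : (P.totalDegree : ℝ) ≤ n * ((max (deltaSet n V) 1 : ℕ) : ℝ) + d * (⌊X⌋₊ : ℝ) := by
    exact_mod_cast hP1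
  have hn0 : (0:ℝ) ≤ n := Nat.cast_nonneg n
  have e1 := mul_le_mul_of_nonneg_left hmax hn0
  have e2 := mul_le_mul_of_nonneg_left hfl hd0.le
  calc (P.totalDegree : ℝ) ≤ _ := hP1'
    _ ≤ n * ((τ⁻¹ ^ ((1:ℝ)/d) + 1) * X) + d * X := add_le_add e1 e2
    _ = _ := by ring
end Paper
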